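/- Let S², d, μ, 𝒫, 𝒫₀, a > 1, the partitions {E_{j,k}}, points x_{j,k} ∈ E_{j,k}, functions φ_{j,k}, ψ_{j,k} ∈ ℳ_{x_{j,k}, a^j}, and the bounded operator S on L²(S²) with SF = ∑_{j,k} μ(E_{j,k}) ⟨F, φ_{j,k}⟩ ψ_{j,k} for F ∈ C¹(S²) be as in the summation operator theorem. Then: (c) for every F ∈ L²(S²), SF = ∑_{j∈ℤ} ∑_{k=1}^{N_j} μ(E_{j,k}) ⟨F, φ_{j,k}⟩ ψ_{j,k}, where the series converges unconditionally in L²(S²); and (d) for every F, G ∈ L²(S²), ⟨SF, G⟩ = ∑_{j∈ℤ} ∑_{k=1}^{N_j} μ(E_{j,k}) ⟨F, φ_{j,k}⟩ ⟨ψ_{j,k}, G⟩, where the series converges absolutely. -/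

import Mathlib

open Metric Manifold MeasureTheory
open scoped RealInnerProductSpace

noncomputable section

abbrev E3 : Type := EuclideanSpace ℝ (Fin 3)

/-- The unit sphere `S² ⊆ ℝ³`. -/
abbrev Sph : Type := Metric.sphere (0 : E3) 1

instance : Fact (Module.finrank ℝ E3 = 2 + 1) := ⟨by simp⟩

/-- The geodesic distance on the sphere, `d(x,y) = arccos⟨x,y⟩`. -/
def gdist (x y : Sph) : ℝ := Real.arccos ⟪(x : E3), (y : E3)⟫

/-- The surface measure on the sphere. -/
def sphMeasure : Measure Sph := (volume : Measure E3).toSphere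

/-- A vector field `X` applied to a function `ω : S² → ℂ`, i.e. `(Xω)(x)`. -/
def mderivApplyS (ω : Sph → ℂ) (x : Sph) (v : TangentSpace (𝓡 2) x) : ℂ :=
  mfderiv (𝓡 2) 𝓘(ℝ, ℂ) ω x v

/-- The class `ℳ_{x,t}`: smooth mean-zero functions `φ` on `S²` such that
`t^{2+deg Y} |(d(x,y)/t)^N (Yφ)(y)| ≤ 1` for all `y ∈ S²`, `Y ∈ 𝒫₀ = 𝒫 ∪ {id}`
and integers `0 ≤ N ≤ 4`, where `𝒫 = {X i}`. -/
def MClass {ι : Type*} (X : ι → (x : Sph) → TangentSpace (𝓡 2) x)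
    (x : Sph) (t : ℝ) : Set (Sph → ℂ) :=
  {φ | ContMDiff (𝓡 2) 𝓘(ℝ, ℂ) (⊤ : ℕ∞) φ ∧
    (∫ y, φ y ∂sphMeasure) = 0 ∧
    (∀ (y : Sph) (N : ℕ), N ≤ 4 → t ^ 2 * ((gdist x y / t) ^ N * ‖φ y‖) ≤ 1) ∧
    (∀ i : ι, ∀ (y : Sph) (N : ℕ), N ≤ 4 →
      t ^ 3 * ((gdist x y / t) ^ N * ‖mderivApplyS φ y (X i y)‖) ≤ 1)}

/-- The inner product `⟨F,φ⟩ = ∫ F φ̄ dμ` on the sphere. -/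
def sphInner (F φ : Sph → ℂ) : ℂ := ∫ y, F y * (starRingEnd ℂ) (φ y) ∂sphMeasure


section HilbertPart
variable {H : Type*} [NormedAddCommGroup H] [InnerProductSpace ℂ H]

lemma bessel_of_schur {P : Type*} (v : P → H) (m : P → ℝ) (hm : ∀ p, 0 ≤ m p) (C : ℝ) (hC0 : 0 ≤ C)
    (hC : ∀ (s : Finset P) (p : P), ∑ q ∈ s, m q * ‖inner ℂ (v p) (v q)‖ ≤ C)
    (F : H) (s : Finset P) :
    ∑ p ∈ s, m p * ‖inner ℂ (v p) F‖ ^ 2 ≤ C * ‖F‖ ^ 2 := by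
  classical
  set B := ∑ p ∈ s, m p * ‖inner ℂ (v p) F‖ ^ 2 with hB
  have hB0 : 0 ≤ B := Finset.sum_nonneg fun p _ => mul_nonneg (hm p) (sq_nonneg _)
  set c : P → ℂ := fun p => (m p : ℂ) * inner ℂ (v p) F with hc
  set g : H := ∑ p ∈ s, c p • v p with hg
  have h1 : inner ℂ g F = (B : ℂ) := by
    rw [hg, sum_inner, hB, Complex.ofReal_sum]
    refine Finset.sum_congr rfl fun p _ => ?_
    rw [inner_smul_left, hc]
    simp only [map_mul, Complex.conj_ofReal]
    rw [mul_assoc, ← Complex.normSq_eq_conj_mul_self, Complex.normSq_eq_norm_sq]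
    push_cast; ring
  have h2 : ‖g‖ ^ 2 ≤ C * B := by
    have e : ((‖g‖ ^ 2 : ℝ) : ℂ) = ∑ p ∈ s, ∑ q ∈ s,
        (starRingEnd ℂ) (c p) * (c q * inner ℂ (v p) (v q)) := by
      have := inner_self_eq_norm_sq_to_K (𝕜 := ℂ) g
      push_cast
      rw [← Complex.coe_algebraMap] at *
      erw [← this]
      conv_lhs => rw [hg, sum_inner]
      refine Finset.sum_congr rfl fun p _ => ?_
      rw [inner_smul_left, inner_sum, Finset.mul_sum]
      refine Finset.sum_congr rfl fun q _ => ?_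
      rw [inner_smul_right]
    have e2 : ‖g‖ ^ 2 = ‖((‖g‖ ^ 2 : ℝ) : ℂ)‖ := by
      rw [Complex.norm_real, Real.norm_of_nonneg (sq_nonneg _)]
    set b : P → ℝ := fun p => ‖inner ℂ (v p) F‖ with hb
    set K : P → P → ℝ := fun p q => ‖inner ℂ (v p) (v q)‖ with hK
    have hKs : ∀ p q, K p q = K q p := fun p q => norm_inner_symm _ _
    have hK0 : ∀ p q, 0 ≤ K p q := fun p q => norm_nonneg _
    have hcn : ∀ p, ‖c p‖ = m p * b p := by
      intro p
      simp only [hc, norm_mul, Complex.norm_real, Real.norm_of_nonneg (hm p), hb]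
    calc ‖g‖ ^ 2 = ‖∑ p ∈ s, ∑ q ∈ s,
        (starRingEnd ℂ) (c p) * (c q * inner ℂ (v p) (v q))‖ := by rw [e2, e]
      _ ≤ ∑ p ∈ s, ∑ q ∈ s, (m p * b p) * ((m q * b q) * K p q) := by
        refine (norm_sum_le _ _).trans (Finset.sum_le_sum fun p _ => ?_)
        refine (norm_sum_le _ _).trans (Finset.sum_le_sum fun q _ => ?_)
        rw [norm_mul, norm_mul, RCLike.norm_conj, hcn, hcn]
      _ ≤ ∑ p ∈ s, ∑ q ∈ s, ((m p * b p ^ 2 * (m q * K p q)) / 2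
            + (m q * b q ^ 2 * (m p * K q p)) / 2) := by
        refine Finset.sum_le_sum fun p _ => Finset.sum_le_sum fun q _ => ?_
        rw [hKs q p]
        have : 0 ≤ (m p * m q * K p q) * (b p - b q) ^ 2 :=
          mul_nonneg (mul_nonneg (mul_nonneg (hm p) (hm q)) (hK0 p q)) (sq_nonneg _)
        nlinarith
      _ = ∑ p ∈ s, m p * b p ^ 2 * ∑ q ∈ s, m q * K p q := by
        simp only [Finset.sum_add_distrib]
        rw [Finset.sum_comm (f := fun p q => (m q * b q ^ 2 * (m p * K q p)) / 2)]
        simp only [← Finset.sum_add_distrib, add_halves, Finset.mul_sum]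
      _ ≤ ∑ p ∈ s, m p * b p ^ 2 * C := by
        refine Finset.sum_le_sum fun p _ => ?_
        exact mul_le_mul_of_nonneg_left (hC s p) (mul_nonneg (hm p) (sq_nonneg _))
      _ = C * B := by rw [← Finset.sum_mul, mul_comm]
  have h3 : B ≤ ‖g‖ * ‖F‖ := by
    have := norm_inner_le_norm (𝕜 := ℂ) g F
    rwa [h1, Complex.norm_real, Real.norm_of_nonneg hB0] at this
  have h4 : B * B ≤ (C * ‖F‖ ^ 2) * B := by
    calc B * B ≤ (‖g‖ * ‖F‖) * (‖g‖ * ‖F‖) := mul_self_le_mul_self hB0 h3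
      _ = ‖g‖ ^ 2 * ‖F‖ ^ 2 := by ring
      _ ≤ (C * B) * ‖F‖ ^ 2 := mul_le_mul_of_nonneg_right h2 (sq_nonneg _)
      _ = _ := by ring
  rcases hB0.eq_or_lt with h | h
  · rw [← h]; positivity
  · exact le_of_mul_le_mul_right h4 h

lemma summable_of_bessel [CompleteSpace H] {P : Type*} (v w : P → H) (m : P → ℝ)
    (hm : ∀ p, 0 ≤ m p) (C : ℝ) (hC0 : 0 ≤ C)
    (hv : ∀ (F : H) (s : Finset P), ∑ p ∈ s, m p * ‖inner ℂ (v p) F‖ ^ 2 ≤ C * ‖F‖ ^ 2)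
    (hw : ∀ (F : H) (s : Finset P), ∑ p ∈ s, m p * ‖inner ℂ (w p) F‖ ^ 2 ≤ C * ‖F‖ ^ 2) :
    (∀ (F : H) (s : Finset P), ‖∑ p ∈ s, ((m p : ℂ) * inner ℂ (v p) F) • w p‖ ^ 2 ≤
      C * ∑ p ∈ s, m p * ‖inner ℂ (v p) F‖ ^ 2) ∧
    (∀ F : H, Summable fun p => ((m p : ℂ) * inner ℂ (v p) F) • w p) ∧
    (∀ F G : H, Summable fun p => ‖(m p : ℂ) * inner ℂ (v p) F * inner ℂ G (w p)‖) := by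
  have key : ∀ (F : H) (s : Finset P), ‖∑ p ∈ s, ((m p : ℂ) * inner ℂ (v p) F) • w p‖ ^ 2 ≤
      C * ∑ p ∈ s, m p * ‖inner ℂ (v p) F‖ ^ 2 := by
    intro F s
    set g := ∑ p ∈ s, ((m p : ℂ) * inner ℂ (v p) F) • w p with hg
    set A := ∑ p ∈ s, m p * ‖inner ℂ (v p) F‖ ^ 2 with hA
    have hA0 : 0 ≤ A := Finset.sum_nonneg fun p _ => mul_nonneg (hm p) (sq_nonneg _)
    have h1 : ‖g‖ ^ 2 ≤ ∑ p ∈ s, (√(m p) * ‖inner ℂ (v p) F‖) * (√(m p) * ‖inner ℂ (w p) g‖) := by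
      have e : ‖g‖ ^ 2 = ‖inner ℂ g g‖ := by
        rw [inner_self_eq_norm_sq_to_K]; simp
      have e2 : inner ℂ g g = ∑ p ∈ s, ((m p : ℂ) * inner ℂ (v p) F) * inner ℂ g (w p) := by
        conv_lhs => rw [hg, inner_sum]
        simp only [inner_smul_right]
        rw [← hg]
      rw [e, e2]
      refine (norm_sum_le _ _).trans (Finset.sum_le_sum fun p _ => ?_)
      rw [norm_mul, norm_mul, Complex.norm_real, Real.norm_of_nonneg (hm p), norm_inner_symm g]
      have := Real.mul_self_sqrt (hm p)
      apply le_of_eq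
      linear_combination (-(‖inner ℂ (v p) F‖ * ‖inner ℂ (w p) g‖)) * this
    have h2 : (‖g‖ ^ 2) ^ 2 ≤ A * (C * ‖g‖ ^ 2) := by
      calc (‖g‖ ^ 2) ^ 2 ≤ (∑ p ∈ s, (√(m p) * ‖inner ℂ (v p) F‖) * (√(m p) * ‖inner ℂ (w p) g‖)) ^ 2 :=
            pow_le_pow_left₀ (sq_nonneg _) h1 2
        _ ≤ (∑ p ∈ s, (√(m p) * ‖inner ℂ (v p) F‖) ^ 2) * ∑ p ∈ s, (√(m p) * ‖inner ℂ (w p) g‖) ^ 2 :=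
            Finset.sum_mul_sq_le_sq_mul_sq _ _ _
        _ = A * ∑ p ∈ s, m p * ‖inner ℂ (w p) g‖ ^ 2 := by
            simp only [mul_pow, Real.sq_sqrt (hm _), hA]
        _ ≤ _ := mul_le_mul_of_nonneg_left (hw g s) hA0
    rcases (sq_nonneg ‖g‖).eq_or_lt with h | h
    · rw [← h]; positivity
    · refine le_of_mul_le_mul_right ?_ h
      nlinarith
  have sv : ∀ F : H, Summable fun p => m p * ‖inner ℂ (v p) F‖ ^ 2 := fun F =>
    summable_of_sum_le (fun p => mul_nonneg (hm p) (sq_nonneg _)) (hv F)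
  have sw : ∀ F : H, Summable fun p => m p * ‖inner ℂ (w p) F‖ ^ 2 := fun F =>
    summable_of_sum_le (fun p => mul_nonneg (hm p) (sq_nonneg _)) (hw F)
  refine ⟨key, fun F => ?_, fun F G => ?_⟩
  · rw [summable_iff_vanishing_norm]
    intro ε hε
    have hδ : 0 < ε ^ 2 / (C + 1) := by positivity
    obtain ⟨s, hs⟩ := summable_iff_vanishing_norm.1 (sv F) _ hδ
    refine ⟨s, fun t ht => ?_⟩
    have h := hs t ht
    have h' := (le_abs_self _).trans_lt h
    rw [lt_div_iff₀ (by positivity)] at h'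
    have := key F t
    have h0 : 0 ≤ ∑ p ∈ t, m p * ‖inner ℂ (v p) F‖ ^ 2 :=
      Finset.sum_nonneg fun p _ => mul_nonneg (hm p) (sq_nonneg _)
    exact lt_of_pow_lt_pow_left₀ 2 hε.le (by nlinarith)
  · refine Summable.of_nonneg_of_le (fun _ => norm_nonneg _) (fun p => ?_) ((sv F).add (sw G))
    rw [norm_mul, norm_mul, Complex.norm_real, Real.norm_of_nonneg (hm p), norm_inner_symm G]
    have := hm p
    nlinarith [mul_nonneg (hm p) (sq_nonneg (‖inner ℂ (v p) F‖ - ‖inner ℂ (w p) G‖)),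
      mul_nonneg (hm p) (sq_nonneg (‖inner ℂ (v p) F‖ + ‖inner ℂ (w p) G‖))]

end HilbertPart

section MeasurePart
open Set Pointwise ENNReal

instance sphFinite : IsFiniteMeasure sphMeasure := by
  unfold sphMeasure; infer_instance

lemma sph_ball_le : ∃ C : ℝ, 0 ≤ C ∧ ∀ (x : Sph) (r : ℝ), 0 < r →
    sphMeasure (ball x r) ≤ ENNReal.ofReal (C * r ^ 2) := by
  set V : ℝ := (volume (ball (0 : E3) 1)).toReal with hV
  have hVe : volume (ball (0 : E3) 1) = ENNReal.ofReal V :=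
    (ENNReal.ofReal_toReal measure_ball_lt_top.ne).symm
  set T : ℝ := (sphMeasure univ).toReal with hT
  have hTe : sphMeasure univ = ENNReal.ofReal T :=
    (ENNReal.ofReal_toReal (measure_ne_top _ _)).symm
  have hV0 : 0 ≤ V := ENNReal.toReal_nonneg
  have hT0 : 0 ≤ T := ENNReal.toReal_nonneg
  refine ⟨48 * V + T, by positivity, fun x r hr => ?_⟩
  rcases le_or_gt r 1 with h1 | h1
  · rw [sphMeasure, Measure.toSphere_apply' _ measurableSet_ball]
    set n : ℕ := ⌊1 / r⌋₊ with hn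
    have hsub : Ioo (0 : ℝ) 1 • ((↑) '' (ball x r) : Set E3) ⊆
        ⋃ k ∈ Finset.range (n + 1), ball ((k * r : ℝ) • (x : E3)) (2 * r) := by
      rintro _ ⟨l, hl, _, ⟨y, hy, rfl⟩, rfl⟩
      simp only [mem_iUnion, Finset.mem_range]
      refine ⟨⌊l / r⌋₊, ?_, ?_⟩
      · refine Nat.lt_succ_of_le (Nat.floor_le_floor ?_)
        gcongr; exact hl.2.le
      · have hf1 := Nat.floor_le (div_nonneg hl.1.le hr.le)
        have hf2 := Nat.lt_floor_add_one (l / r)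
        rw [le_div_iff₀ hr] at hf1
        rw [div_lt_iff₀ hr] at hf2
        set k : ℝ := (⌊l / r⌋₊ : ℝ)
        rw [mem_ball, dist_eq_norm]
        have hy' : ‖(y : E3) - x‖ < r := by
          rw [← dist_eq_norm]; exact hy
        have e : l • (y : E3) - (k * r) • (x : E3) = l • ((y : E3) - x) + (l - k * r) • (x : E3) := by
          module
        have hx : ‖(x : E3)‖ = 1 := by simp
        show ‖l • (y : E3) - (k * r) • (x : E3)‖ < 2 * r
        rw [e]
        refine (norm_add_le _ _).trans_lt ?_
        rw [norm_smul, norm_smul, hx, Real.norm_of_nonneg hl.1.le,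
          Real.norm_of_nonneg (by linarith)]
        have := hl.2; have := hl.1
        nlinarith [norm_nonneg ((y : E3) - x)]
    have hcount : ((n : ℝ) + 1) * r ≤ 2 := by
      have := Nat.floor_le (show 0 ≤ 1 / r by positivity)
      rw [le_div_iff₀ hr] at this
      nlinarith
    calc (Module.finrank ℝ E3 : ℝ≥0∞) * volume (Ioo (0 : ℝ) 1 • ((↑) '' (ball x r) : Set E3))
        ≤ 3 * ∑ k ∈ Finset.range (n + 1), volume (ball ((k * r : ℝ) • (x : E3)) (2 * r)) := by
          have : (Module.finrank ℝ E3 : ℝ≥0∞) = 3 := by simp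
          rw [this]
          gcongr
          exact (measure_mono hsub).trans (measure_biUnion_finset_le _ _)
      _ = ENNReal.ofReal (3 * ((n + 1) * ((2 * r) ^ 3 * V))) := by
          simp only [Measure.addHaar_ball _ _ (by positivity : 0 ≤ 2 * r), hVe]
          rw [Finset.sum_const, Finset.card_range, nsmul_eq_mul, finrank_euclideanSpace_fin]
          rw [ENNReal.ofReal_mul (by norm_num), ENNReal.ofReal_mul (p := (n : ℝ) + 1) (by positivity),
            ENNReal.ofReal_mul (p := (2 * r) ^ 3) (by positivity), ← Nat.cast_succ,
            ENNReal.ofReal_natCast]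
          congr 1
          simp
      _ ≤ _ := by
          apply ENNReal.ofReal_le_ofReal
          have : 3 * ((n + 1) * ((2 * r) ^ 3 * V)) = ((n + 1) * r) * (24 * V * r ^ 2) := by ring
          rw [this]
          have h5 : 0 ≤ 24 * V * r ^ 2 := by positivity
          have h6 : 0 ≤ T * r ^ 2 := by positivity
          nlinarith [mul_le_mul_of_nonneg_right hcount h5]
  · refine (measure_mono (subset_univ _)).trans ?_
    rw [hTe]
    apply ENNReal.ofReal_le_ofReal
    have : 1 ≤ r ^ 2 := by nlinarith
    nlinarith

/-- weights -/
def wt (n : ℕ) (t : ℝ) (x y : Sph) : ℝ := (t ^ 2)⁻¹ * ((1 + dist x y / t) ^ n)⁻¹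

lemma wt_nonneg (n : ℕ) {t : ℝ} (ht : 0 < t) (x y : Sph) : 0 ≤ wt n t x y := by
  unfold wt; positivity

lemma wt_symm (n : ℕ) (t : ℝ) (x y : Sph) : wt n t x y = wt n t y x := by
  unfold wt; rw [dist_comm]

lemma wt_cont (n : ℕ) {t : ℝ} (ht : 0 < t) (x : Sph) : Continuous (fun y => wt n t x y) := by
  unfold wt
  refine continuous_const.mul (Continuous.inv₀ (by fun_prop) fun y => ?_)
  positivity

lemma sph_integrable {V : Type*} [NormedAddCommGroup V] {f : Sph → V}
    (hf : Continuous f) : Integrable f sphMeasure :=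
  hf.integrable_of_hasCompactSupport (HasCompactSupport.of_compactSpace f)

lemma wt_int : ∃ C : ℝ, 0 ≤ C ∧ ∀ (x : Sph) (t : ℝ), 0 < t →
    ∫ y, wt 3 t x y ∂sphMeasure ≤ C := by
  obtain ⟨C, hC, hb⟩ := sph_ball_le
  refine ⟨16 * C, by positivity, fun x t ht => ?_⟩
  have hnn : ∀ y, 0 ≤ wt 3 t x y := wt_nonneg 3 ht x
  rw [integral_eq_lintegral_of_nonneg_ae (Filter.Eventually.of_forall hnn)
    (wt_cont 3 ht x).aestronglyMeasurable]
  refine ENNReal.toReal_le_of_le_ofReal (by positivity) ?_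
  have hpt : ∀ y, ENNReal.ofReal (wt 3 t x y) ≤ ∑' n : ℕ,
      (ball x (2 ^ n * t)).indicator (fun _ => ENNReal.ofReal (8 * (t ^ 2)⁻¹ * (1 / 8) ^ n)) y := by
    intro y
    have hex : ∃ n : ℕ, dist x y < 2 ^ n * t := by
      obtain ⟨n, hn⟩ := pow_unbounded_of_one_lt (dist x y / t) (one_lt_two)
      exact ⟨n, by rwa [div_lt_iff₀ ht] at hn⟩
    classical
    set n := Nat.find hex with hn
    have h1 : dist x y < 2 ^ n * t := Nat.find_spec hex
    refine le_trans ?_ (ENNReal.le_tsum n)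
    rw [indicator_of_mem (by rw [mem_ball, dist_comm]; exact h1)]
    apply ENNReal.ofReal_le_ofReal
    unfold wt
    rw [mul_comm 8, mul_assoc]
    gcongr
    have hd : 0 ≤ dist x y / t := by positivity
    rcases Nat.eq_zero_or_pos n with h0 | h0
    · rw [h0, pow_zero, mul_one]
      refine (inv_le_one_of_one_le₀ (one_le_pow₀ (by linarith))).trans (by norm_num)
    · have h2 : ¬ dist x y < 2 ^ (n - 1) * t := Nat.find_min hex (by omega)
      push Not at h2
      rw [← le_div_iff₀ ht] at h2
      have h3 : ((2 : ℝ) ^ (n - 1)) ^ 3 ≤ (1 + dist x y / t) ^ 3 := by gcongr; linarith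
      have h4 : (8 : ℝ) * (1 / 8) ^ n = (((2 : ℝ) ^ (n - 1)) ^ 3)⁻¹ := by
        obtain ⟨k, hk⟩ : ∃ k, n = k + 1 := ⟨n - 1, by omega⟩
        rw [hk, Nat.add_sub_cancel, ← pow_mul, mul_comm k 3, pow_mul, pow_succ]
        rw [one_div, inv_pow, show (2 : ℝ) ^ 3 = 8 by norm_num]
        ring
      rw [h4]
      gcongr
  calc ∫⁻ y, ENNReal.ofReal (wt 3 t x y) ∂sphMeasure
      ≤ ∫⁻ y, ∑' n : ℕ, (ball x (2 ^ n * t)).indicator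
        (fun _ => ENNReal.ofReal (8 * (t ^ 2)⁻¹ * (1 / 8) ^ n)) y ∂sphMeasure :=
        lintegral_mono hpt
    _ = ∑' n : ℕ, ENNReal.ofReal (8 * (t ^ 2)⁻¹ * (1 / 8) ^ n) * sphMeasure (ball x (2 ^ n * t)) := by
        rw [lintegral_tsum]
        · congr 1; ext n
          rw [lintegral_indicator_const measurableSet_ball]
        · intro n
          exact (measurable_const.indicator measurableSet_ball).aemeasurable
    _ ≤ ∑' n : ℕ, ENNReal.ofReal ((8 * C) * (1 / 2) ^ n) := by
        refine ENNReal.tsum_le_tsum fun n => ?_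
        refine (mul_le_mul_right (hb x (2 ^ n * t) (by positivity)) _).trans ?_
        rw [← ENNReal.ofReal_mul (by positivity)]
        apply le_of_eq
        congr 1
        have : ((1 : ℝ) / 8) ^ n * (2 ^ n) ^ 2 = (1 / 2) ^ n := by
          rw [← pow_mul, mul_comm n 2, pow_mul, ← mul_pow]; norm_num
        rw [← this]
        field_simp
    _ = ENNReal.ofReal (16 * C) := by
        rw [← ENNReal.ofReal_tsum_of_nonneg (fun n => by positivity)
          ((summable_geometric_two).mul_left _), tsum_mul_left, tsum_geometric_two]
        congr 1; ring

end MeasurePart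

section GeomPart
open Set

lemma sph_norm (x : Sph) : ‖(x : E3)‖ = 1 := by simp

lemma sph_inner_le (x y : Sph) : ⟪(x : E3), (y : E3)⟫ ≤ 1 := by
  have := real_inner_le_norm (x : E3) y
  rwa [sph_norm, sph_norm, one_mul] at this

lemma sph_le_inner (x y : Sph) : -1 ≤ ⟪(x : E3), (y : E3)⟫ := by
  have := neg_le_of_abs_le (abs_real_inner_le_norm (x : E3) y)
  rwa [sph_norm, sph_norm, one_mul] at this

lemma cos_gdist (x y : Sph) : Real.cos (gdist x y) = ⟪(x : E3), (y : E3)⟫ :=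
  Real.cos_arccos (sph_le_inner x y) (sph_inner_le x y)

lemma gdist_nonneg (x y : Sph) : 0 ≤ gdist x y := Real.arccos_nonneg _

lemma dist_sq_eq (x y : Sph) : dist x y ^ 2 = 2 - 2 * Real.cos (gdist x y) := by
  rw [cos_gdist, Subtype.dist_eq, dist_eq_norm, norm_sub_sq_real, sph_norm, sph_norm]
  ring

lemma dist_le_gdist (x y : Sph) : dist x y ≤ gdist x y := by
  refine le_of_sq_le_sq ?_ (gdist_nonneg x y)
  rw [dist_sq_eq]
  have := Real.one_sub_sq_div_two_le_cos (x := gdist x y)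
  linarith

lemma gdist_le_dist (x y : Sph) : gdist x y ≤ 2 * dist x y := by
  have h1 : gdist x y ≤ Real.pi := Real.arccos_le_pi _
  have h0 := gdist_nonneg x y
  have := Real.cos_le_one_sub_mul_cos_sq (x := gdist x y) (by rw [abs_of_nonneg h0]; exact h1)
  have h2 := dist_sq_eq x y
  have hpi : Real.pi ^ 2 ≤ 16 := by nlinarith [Real.pi_le_four, Real.pi_pos]
  have h3 : 4 / Real.pi ^ 2 * gdist x y ^ 2 ≤ dist x y ^ 2 := by
    rw [h2]; linarith [show 4 / Real.pi ^ 2 * gdist x y ^ 2 = 2 * (2 / Real.pi ^ 2 * gdist x y ^ 2) by ring]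
  have h4 : (1 : ℝ) / 4 ≤ 4 / Real.pi ^ 2 := by
    rw [div_le_div_iff₀ (by norm_num) (by positivity)]; linarith
  refine le_of_sq_le_sq ?_ (by positivity)
  nlinarith [mul_le_mul_of_nonneg_right h4 (sq_nonneg (gdist x y))]

lemma exists_perp (x y : Sph) : ∃ e : E3, ‖e‖ = 1 ∧ ⟪(x : E3), e⟫ = 0 ∧
    (y : E3) = Real.cos (gdist x y) • (x : E3) + Real.sin (gdist x y) • e := by
  set w : E3 := (y : E3) - Real.cos (gdist x y) • (x : E3) with hw
  have hxx : ⟪(x : E3), (x : E3)⟫ = 1 := by rw [real_inner_self_eq_norm_sq, sph_norm]; norm_num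
  have hxw : ⟪(x : E3), w⟫ = 0 := by
    rw [hw, inner_sub_right, inner_smul_right, hxx, cos_gdist]; ring
  have hs : 0 ≤ Real.sin (gdist x y) :=
    Real.sin_nonneg_of_nonneg_of_le_pi (gdist_nonneg x y) (Real.arccos_le_pi _)
  have hwn : ‖w‖ = Real.sin (gdist x y) := by
    refine (sq_eq_sq₀ (norm_nonneg _) hs).1 ?_
    rw [hw, norm_sub_sq_real, sph_norm, norm_smul, sph_norm, inner_smul_right, real_inner_comm,
      ← cos_gdist, Real.sin_sq, mul_one, Real.norm_eq_abs, sq_abs]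
    ring
  by_cases h : w = 0
  · have hfr : 0 < Module.finrank ℝ (ℝ ∙ (x : E3))ᗮ := by
      have := Submodule.finrank_orthogonal_span_singleton (𝕜 := ℝ) (n := 2) (v := (x : E3))
        (by intro h; have := sph_norm x; rw [h] at this; simp at this)
      omega
    have : Nontrivial (ℝ ∙ (x : E3))ᗮ := Module.nontrivial_of_finrank_pos hfr
    obtain ⟨⟨e, he⟩, hne⟩ := exists_ne (0 : (ℝ ∙ (x : E3))ᗮ)
    have hne' : e ≠ 0 := fun h => hne (by simpa using h)
    rw [Submodule.mem_orthogonal_singleton_iff_inner_right] at he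
    refine ⟨‖e‖⁻¹ • e, ?_, ?_, ?_⟩
    · rw [norm_smul, norm_inv, norm_norm, inv_mul_cancel₀ (norm_ne_zero_iff.2 hne')]
    · rw [inner_smul_right, he, mul_zero]
    · rw [← hwn, h, norm_zero, zero_smul, add_zero]
      exact sub_eq_zero.1 h
  · have hn : ‖w‖ ≠ 0 := norm_ne_zero_iff.2 h
    refine ⟨‖w‖⁻¹ • w, ?_, ?_, ?_⟩
    · rw [norm_smul, norm_inv, norm_norm, inv_mul_cancel₀ hn]
    · rw [inner_smul_right, hxw, mul_zero]
    · rw [← hwn, smul_smul, mul_inv_cancel₀ hn, one_smul, hw]; abel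

/-- derivative of a function on the sphere -/
def mD {V : Type*} [NormedAddCommGroup V] [NormedSpace ℝ V] (f : Sph → V) (z : Sph) :
    TangentSpace (𝓡 2) z →L[ℝ] V := mfderiv (𝓡 2) 𝓘(ℝ, V) f z

lemma mD_cont {V : Type*} [NormedAddCommGroup V] [NormedSpace ℝ V] {f : Sph → V}
    (hf : ContMDiff (𝓡 2) 𝓘(ℝ, V) 1 f) (X : (x : Sph) → TangentSpace (𝓡 2) x)
    (hX : ContMDiff (𝓡 2) (𝓡 2).tangent (⊤ : ℕ∞)
      (fun x => (⟨x, X x⟩ : TangentBundle (𝓡 2) Sph))) :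
    Continuous fun z => mD f z (X z) := by
  have h1 : ContMDiff (𝓡 2).tangent 𝓘(ℝ, V).tangent 0 (tangentMap (𝓡 2) 𝓘(ℝ, V) f) :=
    hf.contMDiff_tangentMap (by norm_num)
  have h2 := h1.continuous.comp hX.continuous
  have h3 := (contMDiff_snd_tangentBundle_modelSpace V 𝓘(ℝ, V) (n := 0)).continuous
  exact h3.comp h2

lemma mD_coe_inj (z : Sph) : Function.Injective (mD (fun x : Sph => (x : E3)) z) :=
  mfderiv_coe_sphere_injective z

lemma mD_coe_perp (z : Sph) (w : E3) (h : ⟪(z : E3), w⟫ = 0) :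
    ∃ u, mD (fun x : Sph => (x : E3)) z u = w := by
  have h1 := range_mfderiv_coe_sphere (n := 2) z
  have h2 : w ∈ (ℝ ∙ (z : E3))ᗮ := by
    rwa [Submodule.mem_orthogonal_singleton_iff_inner_right]
  rw [← h1] at h2
  exact h2

lemma mD_coe_inner (z : Sph) (u : TangentSpace (𝓡 2) z) :
    ⟪(z : E3), mD (fun x : Sph => (x : E3)) z u⟫ = 0 := by
  have h1 := range_mfderiv_coe_sphere (n := 2) z
  have h2 : mD (fun x : Sph => (x : E3)) z u ∈ (ℝ ∙ (z : E3))ᗮ := by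
    rw [← h1]; exact ⟨u, rfl⟩
  rwa [Submodule.mem_orthogonal_singleton_iff_inner_right] at h2

lemma frame_bound {ι : Type*} [Fintype ι] (X : ι → (x : Sph) → TangentSpace (𝓡 2) x)
    (hXsmooth : ∀ i, ContMDiff (𝓡 2) (𝓡 2).tangent (⊤ : ℕ∞)
      (fun x => (⟨x, X i x⟩ : TangentBundle (𝓡 2) Sph)))
    (hXspan : ∀ x : Sph, Submodule.span ℝ (Set.range fun i => X i x) = ⊤) :
    ∃ C : ℝ, 0 ≤ C ∧ ∀ (z : Sph) (u : TangentSpace (𝓡 2) z), ∃ c : ι → ℝ,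
      (∀ i, |c i| ≤ C * ‖mD (fun x : Sph => (x : E3)) z u‖) ∧ u = ∑ i, c i • X i z := by
  set Y : ι → Sph → E3 := fun i z => mD (fun x : Sph => (x : E3)) z (X i z) with hY
  have hYc : ∀ i, Continuous (Y i) := fun i => mD_cont contMDiff_coe_sphere (X i) (hXsmooth i)
  -- quadratic form
  set Q : Sph × Sph → ℝ := fun p => ∑ i, ⟪Y i p.1, (p.2 : E3)⟫ ^ 2 + ⟪(p.1 : E3), (p.2 : E3)⟫ ^ 2 with hQ
  have hQc : Continuous Q := by
    have : ∀ i, Continuous fun p : Sph × Sph => Y i p.1 := fun i => (hYc i).comp continuous_fst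
    refine (continuous_finsetSum _ fun i _ => ((this i).inner (by fun_prop)).pow 2).add ?_
    exact (Continuous.inner (by fun_prop) (by fun_prop)).pow 2
  have hQpos : ∀ p, 0 < Q p := by
    rintro ⟨z, w⟩
    have h0 : 0 ≤ ∑ i, ⟪Y i z, (w : E3)⟫ ^ 2 := Finset.sum_nonneg fun i _ => sq_nonneg _
    have h1 : 0 ≤ ⟪(z : E3), (w : E3)⟫ ^ 2 := sq_nonneg _
    refine lt_of_le_of_ne (add_nonneg h0 h1) fun h => ?_
    have h2 : ∑ i, ⟪Y i z, (w : E3)⟫ ^ 2 = 0 := by simp only [hQ] at h; linarith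
    have h3 : ⟪(z : E3), (w : E3)⟫ ^ 2 = 0 := by simp only [hQ] at h; linarith
    obtain ⟨u, hu⟩ := mD_coe_perp z w (by simpa using h3)
    have h4 : ∀ i, ⟪Y i z, (w : E3)⟫ = 0 := by
      intro i
      have := (Finset.sum_eq_zero_iff_of_nonneg fun i _ => sq_nonneg _).1 h2 i (Finset.mem_univ i)
      simpa using this
    have h5 : ∀ u' : TangentSpace (𝓡 2) z, ⟪mD (fun x : Sph => (x : E3)) z u', (w : E3)⟫ = 0 := by
      intro u'
      have hmem : u' ∈ Submodule.span ℝ (Set.range fun i => X i z) := by rw [hXspan]; trivial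
      induction hmem using Submodule.span_induction with
      | mem x hx => obtain ⟨i, rfl⟩ := hx; exact h4 i
      | zero => simp
      | add a b _ _ ha hb => rw [map_add, inner_add_left, ha, hb, add_zero]
      | smul r a _ ha => rw [map_smul, inner_smul_left, ha, mul_zero]
    have h6 := h5 u
    rw [hu, real_inner_self_eq_norm_sq, sph_norm] at h6
    norm_num at h6
  have hne : Nonempty Sph := (NormedSpace.sphere_nonempty.2 zero_le_one).to_subtype
  obtain ⟨p0, -, hp0⟩ := isCompact_univ.exists_isMinOn (univ_nonempty (α := Sph × Sph)) hQc.continuousOn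
  set m := Q p0 with hm
  have hm0 : 0 < m := hQpos p0
  have hQw : ∀ (z : Sph) (w : E3), m * ‖w‖ ^ 2 ≤ ∑ i, ⟪Y i z, w⟫ ^ 2 + ⟪(z : E3), w⟫ ^ 2 := by
    intro z w
    by_cases hw : w = 0
    · simp [hw]
    have hn : ‖w‖ ≠ 0 := norm_ne_zero_iff.2 hw
    have h1 : m ≤ Q (z, ⟨‖w‖⁻¹ • w, by
      rw [mem_sphere_zero_iff_norm, norm_smul, norm_inv, norm_norm, inv_mul_cancel₀ hn]⟩) :=
      isMinOn_iff.1 hp0 _ (mem_univ _)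
    simp only [hQ, inner_smul_right, mul_pow] at h1
    rw [← Finset.mul_sum, ← mul_add, inv_pow, inv_mul_eq_div, le_div_iff₀ (by positivity)] at h1
    exact h1
  refine ⟨√(1 / m), by positivity, fun z u => ?_⟩
  set U := mD (fun x : Sph => (x : E3)) z u with hU
  set A : E3 →ₗ[ℝ] E3 :=
    { toFun := fun w => ∑ i, ⟪Y i z, w⟫ • Y i z + ⟪(z : E3), w⟫ • (z : E3)
      map_add' := fun a b => by
        simp only [inner_add_right, add_smul, Finset.sum_add_distrib]; abel
      map_smul' := fun r a => by
        simp only [inner_smul_right, mul_smul, ← Finset.smul_sum, smul_add, RingHom.id_apply] } with hA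
  have hAw : ∀ w, ⟪A w, w⟫ = ∑ i, ⟪Y i z, w⟫ ^ 2 + ⟪(z : E3), w⟫ ^ 2 := by
    intro w
    show ⟪∑ i, ⟪Y i z, w⟫ • Y i z + ⟪(z : E3), w⟫ • (z : E3), w⟫ = _
    rw [inner_add_left, sum_inner]
    simp only [real_inner_smul_left, pow_two]
  have hinj : Function.Injective A := by
    rw [← LinearMap.ker_eq_bot, LinearMap.ker_eq_bot']
    intro w hw
    have h1 := hQw z w
    rw [← hAw, hw, inner_zero_left] at h1
    by_contra hne
    have : 0 < ‖w‖ := norm_pos_iff.2 hne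
    have : 0 < m * ‖w‖ ^ 2 := by positivity
    linarith
  obtain ⟨w, hw⟩ := (LinearMap.injective_iff_surjective.1 hinj) U
  have hzz : ⟪(z : E3), (z : E3)⟫ = 1 := by rw [real_inner_self_eq_norm_sq, sph_norm]; norm_num
  have hzw : ⟪(z : E3), w⟫ = 0 := by
    have h1 : ⟪(z : E3), A w⟫ = 0 := by rw [hw]; exact mD_coe_inner z u
    have h2 : ⟪(z : E3), ∑ i, ⟪Y i z, w⟫ • Y i z + ⟪(z : E3), w⟫ • (z : E3)⟫ = 0 := h1
    rw [inner_add_right, inner_sum, inner_smul_right, hzz, mul_one,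
      Finset.sum_eq_zero, zero_add] at h2
    · exact h2
    · intro i _
      rw [inner_smul_right, mD_coe_inner z (X i z), mul_zero]
  have hUe : U = ∑ i, ⟪Y i z, w⟫ • Y i z := by
    rw [← hw]
    show ∑ i, ⟪Y i z, w⟫ • Y i z + ⟪(z : E3), w⟫ • (z : E3) = _
    rw [hzw, zero_smul, add_zero]
  have hsum := hAw w
  rw [hw, hzw] at hsum
  have hle := hQw z w
  rw [hzw] at hle
  have hUw : ⟪U, w⟫ ≤ ‖U‖ * ‖w‖ := real_inner_le_norm _ _
  have hwU : m * ‖w‖ ≤ ‖U‖ := by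
    rcases (norm_nonneg w).eq_or_lt with h | h
    · rw [← h, mul_zero]; positivity
    · refine le_of_mul_le_mul_right ?_ h
      nlinarith
  refine ⟨fun i => ⟪Y i z, w⟫, fun i => ?_, ?_⟩
  · have h1 : ⟪Y i z, w⟫ ^ 2 ≤ ∑ i, ⟪Y i z, w⟫ ^ 2 :=
      Finset.single_le_sum (f := fun i => ⟪Y i z, w⟫ ^ 2) (fun i _ => sq_nonneg _) (Finset.mem_univ i)
    refine abs_le_of_sq_le_sq ?_ (by positivity)
    rw [mul_pow, Real.sq_sqrt (by positivity)]
    rw [one_div, inv_mul_eq_div, le_div_iff₀ hm0]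
    have h2 : ⟪Y i z, w⟫ ^ 2 ≤ ‖U‖ * ‖w‖ := by linarith
    nlinarith [norm_nonneg U, norm_nonneg w]
  · apply mD_coe_inj z
    rw [← hU, hUe, map_sum]
    simp only [map_smul, hY]

lemma great_circle_lip {ι : Type*} [Fintype ι] (X : ι → (x : Sph) → TangentSpace (𝓡 2) x)
    (hXsmooth : ∀ i, ContMDiff (𝓡 2) (𝓡 2).tangent (⊤ : ℕ∞)
      (fun x => (⟨x, X i x⟩ : TangentBundle (𝓡 2) Sph)))
    (hXspan : ∀ x : Sph, Submodule.span ℝ (Set.range fun i => X i x) = ⊤) :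
    ∃ C : ℝ, 0 ≤ C ∧ ∀ (f : Sph → ℂ), ContMDiff (𝓡 2) 𝓘(ℝ, ℂ) 1 f → ∀ (x y : Sph) (M : ℝ),
      (∀ i, ∀ z : Sph, dist z x ≤ 2 * dist x y → ‖mD f z (X i z)‖ ≤ M) →
      ‖f y - f x‖ ≤ C * M * dist x y := by
  obtain ⟨C, hC0, hC⟩ := frame_bound X hXsmooth hXspan
  refine ⟨2 * (Fintype.card ι * C), by positivity, fun f hf x y M hM => ?_⟩
  obtain ⟨e, he1, hxe, hy⟩ := exists_perp x y
  set θ := gdist x y with hθ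
  have hxx : ⟪(x : E3), (x : E3)⟫ = 1 := by rw [real_inner_self_eq_norm_sq, sph_norm]; norm_num
  have hee : ⟪e, e⟫ = 1 := by rw [real_inner_self_eq_norm_sq, he1]; norm_num
  have hex : ⟪e, (x : E3)⟫ = 0 := by rw [real_inner_comm, hxe]
  have hnorm : ∀ p q : ℝ, ‖p • (x : E3) + q • e‖ ^ 2 = p ^ 2 + q ^ 2 := by
    intro p q
    rw [norm_add_sq_real, norm_smul, norm_smul, sph_norm, he1, real_inner_smul_left,
      inner_smul_right, hxe]
    simp
  set g : ℝ → E3 := fun s => Real.cos s • (x : E3) + Real.sin s • e with hg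
  have hgmem : ∀ s, g s ∈ sphere (0 : E3) 1 := by
    intro s
    rw [mem_sphere_zero_iff_norm, ← pow_left_inj₀ (norm_nonneg _) zero_le_one two_ne_zero, hnorm]
    rw [Real.cos_sq_add_sin_sq]; norm_num
  have hgc : ContDiff ℝ 1 g := by
    have h1 := Real.contDiff_cos (n := 1)
    have h2 := Real.contDiff_sin (n := 1)
    exact (h1.smul contDiff_const).add (h2.smul contDiff_const)
  set γ : ℝ → Sph := Set.codRestrict g (sphere (0 : E3) 1) hgmem with hγ
  have hγc : ContMDiff 𝓘(ℝ, ℝ) (𝓡 2) 1 γ := hgc.contMDiff.codRestrict_sphere hgmem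
  have hγ0 : γ 0 = x := by
    apply Subtype.ext
    show Real.cos 0 • (x : E3) + Real.sin 0 • e = x
    simp
  have hγθ : γ θ = y := by
    apply Subtype.ext
    exact hy.symm
  have hgd : ∀ s, HasDerivAt g (-Real.sin s • (x : E3) + Real.cos s • e) s := fun s =>
    ((Real.hasDerivAt_cos s).smul_const _).add ((Real.hasDerivAt_sin s).smul_const _)
  have hcard : ∀ s : ℝ, dist (γ s) x ≤ 2 * dist x y → ∃ d : ℂ, HasDerivAt (f ∘ γ) d s ∧
      ‖d‖ ≤ Fintype.card ι * C * M := by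
    intro s hs
    have hγs := ((hγc s).mdifferentiableAt one_ne_zero).hasMFDerivAt
    have hfs := ((hf (γ s)).mdifferentiableAt one_ne_zero).hasMFDerivAt
    have hcs := (((contMDiff_coe_sphere (E := E3) (n := 2) (m := 1)) (γ s)).mdifferentiableAt
      one_ne_zero).hasMFDerivAt
    set G : ℝ →L[ℝ] TangentSpace (𝓡 2) (γ s) := mfderiv 𝓘(ℝ, ℝ) (𝓡 2) γ s with hG
    set u : TangentSpace (𝓡 2) (γ s) := G 1 with hu
    have hU : mD (fun x : Sph => (x : E3)) (γ s) u = -Real.sin s • (x : E3) + Real.cos s • e := by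
      have h1 : HasFDerivAt g ((mD (fun x : Sph => (x : E3)) (γ s)).comp G) s :=
        hasMFDerivAt_iff_hasFDerivAt.1 (hcs.comp s hγs)
      have h2 := (hgd s).hasFDerivAt
      have h3 := h1.unique h2
      have h4 := DFunLike.congr_fun h3 (1 : ℝ)
      simpa using h4
    have hUn : ‖mD (fun x : Sph => (x : E3)) (γ s) u‖ = 1 := by
      rw [hU, ← pow_left_inj₀ (norm_nonneg _) zero_le_one two_ne_zero, hnorm, neg_sq,
        Real.sin_sq_add_cos_sq]; norm_num
    obtain ⟨c, hc, huc⟩ := hC (γ s) u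
    rw [hUn, mul_one] at hc
    refine ⟨mD f (γ s) u, ?_, ?_⟩
    · have h1 : HasFDerivAt (f ∘ γ) ((mD f (γ s)).comp G) s :=
        hasMFDerivAt_iff_hasFDerivAt.1 (hfs.comp s hγs)
      exact h1.hasDerivAt
    · rw [huc, map_sum]
      refine (norm_sum_le _ _).trans ?_
      rw [mul_assoc, ← nsmul_eq_mul, Fintype.card, ← Finset.sum_const]
      refine Finset.sum_le_sum fun i _ => ?_
      rw [map_smul, norm_smul]
      exact mul_le_mul (hc i) (hM i _ hs) (norm_nonneg _) hC0
  have hdist : ∀ s ∈ Icc 0 θ, dist (γ s) x ≤ 2 * dist x y := by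
    intro s hs
    refine le_trans ?_ (gdist_le_dist x y)
    refine le_trans ?_ hs.2
    refine le_of_sq_le_sq ?_ hs.1
    rw [Subtype.dist_eq, dist_eq_norm]
    have : ((γ s : Sph) : E3) - x = (Real.cos s - 1) • (x : E3) + Real.sin s • e := by
      show Real.cos s • (x : E3) + Real.sin s • e - x = _
      module
    rw [this, hnorm]
    have := Real.one_sub_sq_div_two_le_cos (x := s)
    nlinarith [Real.sin_sq_add_cos_sq s]
  have hM0 : 0 ≤ Fintype.card ι * C * M := by
    obtain ⟨d, -, hd⟩ := hcard 0 (hdist 0 ⟨le_rfl, gdist_nonneg _ _⟩)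
    exact (norm_nonneg _).trans hd
  choose! d hd1 hd2 using hcard
  have := (convex_Icc 0 θ).norm_image_sub_le_of_norm_hasDerivWithin_le (f := f ∘ γ) (f' := d)
    (C := Fintype.card ι * C * M)
    (fun s hs => (hd1 s (hdist s hs)).hasDerivWithinAt) (fun s hs => hd2 s (hdist s hs))
    (left_mem_Icc.2 (gdist_nonneg x y)) (right_mem_Icc.2 (gdist_nonneg x y))
  simp only [Function.comp, hγ0, hγθ, sub_zero] at this
  rw [Real.norm_of_nonneg (gdist_nonneg x y)] at this
  refine this.trans ((mul_le_mul_of_nonneg_left (gdist_le_dist x y) hM0).trans (le_of_eq ?_))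
  ring

end GeomPart

section EstPart
open Set

lemma wt_le_shift (n : ℕ) {t : ℝ} (ht : 0 < t) {κ : ℝ} (hκ : 0 ≤ κ) {x z : Sph}
    (h : dist x z ≤ κ * t) (y : Sph) : wt n t z y ≤ (1 + κ) ^ n * wt n t x y := by
  unfold wt
  have h1 : (1 + dist x y / t) ≤ (1 + κ) * (1 + dist z y / t) := by
    have h2 : dist x y / t ≤ κ + dist z y / t := by
      rw [div_le_iff₀ ht, add_mul, div_mul_cancel₀ _ ht.ne']
      linarith [dist_triangle x z y]
    have h3 : 0 ≤ dist z y / t := by positivity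
    nlinarith
  have h4 : (1 + dist x y / t) ^ n ≤ (1 + κ) ^ n * (1 + dist z y / t) ^ n := by
    rw [← mul_pow]
    gcongr
  have h5 : 0 < (1 + dist x y / t) ^ n := by positivity
  have h6 : 0 < (1 + dist z y / t) ^ n := by positivity
  have h7 : ((1 + dist z y / t) ^ n)⁻¹ ≤ (1 + κ) ^ n * ((1 + dist x y / t) ^ n)⁻¹ := by
    rw [inv_le_iff_one_le_mul₀ h6, mul_right_comm, ← div_eq_mul_inv, le_div_iff₀ h5, one_mul]
    exact h4
  calc (t ^ 2)⁻¹ * ((1 + dist z y / t) ^ n)⁻¹ ≤ (t ^ 2)⁻¹ * ((1 + κ) ^ n * ((1 + dist x y / t) ^ n)⁻¹) := by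
        gcongr
    _ = _ := by ring

lemma wt_four_le_three {t : ℝ} (ht : 0 < t) (x y : Sph) : wt 4 t x y ≤ wt 3 t x y := by
  unfold wt
  have : 0 ≤ dist x y / t := by positivity
  gcongr
  · linarith
  · norm_num

lemma dist_wt_four {t : ℝ} (ht : 0 < t) (x y : Sph) : dist x y / t * wt 4 t x y ≤ wt 3 t x y := by
  unfold wt
  have h0 : 0 ≤ dist x y / t := by positivity
  rw [mul_left_comm]
  gcongr
  rw [← div_eq_mul_inv, div_le_iff₀ (by positivity), pow_succ (1 + dist x y / t) 3, ← mul_assoc,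
    inv_mul_cancel₀ (by positivity)]
  linarith

lemma mclass_aux {t : ℝ} (ht : 0 < t) (x y : Sph) {B : ℝ} (hB : 0 ≤ B)
    (h : ∀ N : ℕ, N ≤ 4 → t ^ 2 * ((gdist x y / t) ^ N * B) ≤ 1) : B ≤ 16 * wt 4 t x y := by
  have h0 := h 0 (by norm_num)
  have h4 := h 4 le_rfl
  rw [pow_zero, one_mul] at h0
  set u := dist x y / t with hu
  have hu0 : 0 ≤ u := by positivity
  have hug : u ≤ gdist x y / t := by
    rw [hu]; gcongr; exact dist_le_gdist x y
  have h4' : t ^ 2 * (u ^ 4 * B) ≤ 1 := le_trans (by gcongr) h4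
  have hp : (1 + u) ^ 4 ≤ 8 * (1 + u ^ 4) := by
    nlinarith [sq_nonneg (u - 1), sq_nonneg (u ^ 2 - 1), mul_nonneg hu0 (sq_nonneg (u - 1)),
      sq_nonneg (u ^ 2 - u)]
  unfold wt
  rw [← hu, ← mul_inv, ← div_eq_mul_inv, le_div_iff₀ (by positivity)]
  have : 0 ≤ t ^ 2 * B := by positivity
  nlinarith [mul_le_mul_of_nonneg_left hp this]

variable {ι : Type*} {X : ι → (x : Sph) → TangentSpace (𝓡 2) x}

lemma mclass_bound {t : ℝ} (ht : 0 < t) {x : Sph} {φ : Sph → ℂ} (h : φ ∈ MClass X x t) (y : Sph) :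
    ‖φ y‖ ≤ 16 * wt 4 t x y :=
  mclass_aux ht x y (norm_nonneg _) (fun N hN => h.2.2.1 y N hN)

lemma mclass_grad {t : ℝ} (ht : 0 < t) {x : Sph} {φ : Sph → ℂ} (h : φ ∈ MClass X x t) (i : ι) (y : Sph) :
    ‖mD φ y (X i y)‖ ≤ 16 * wt 4 t x y / t := by
  rw [le_div_iff₀ ht]
  refine mclass_aux ht x y (by positivity) (fun N hN => le_trans (le_of_eq ?_) (h.2.2.2 i y N hN))
  show _ = t ^ 3 * ((gdist x y / t) ^ N * ‖mD φ y (X i y)‖)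
  ring

lemma mclass_cont {t : ℝ} {x : Sph} {φ : Sph → ℂ} (h : φ ∈ MClass X x t) : Continuous φ :=
  h.1.continuous

lemma mclass_lip [Fintype ι]
    (hXsmooth : ∀ i, ContMDiff (𝓡 2) (𝓡 2).tangent (⊤ : ℕ∞)
      (fun x => (⟨x, X i x⟩ : TangentBundle (𝓡 2) Sph)))
    (hXspan : ∀ x : Sph, Submodule.span ℝ (Set.range fun i => X i x) = ⊤) :
    ∃ C : ℝ, 0 ≤ C ∧ ∀ (t : ℝ), 0 < t → ∀ (x : Sph) (φ : Sph → ℂ), φ ∈ MClass X x t → ∀ y z : Sph,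
      ‖φ y - φ z‖ ≤ C * (dist z y / t) * (wt 4 t x y + wt 4 t x z) := by
  obtain ⟨C, hC0, hC⟩ := great_circle_lip X hXsmooth hXspan
  refine ⟨C * 1296 + 16, by positivity, fun t ht x φ hφ y z => ?_⟩
  have hwy := wt_nonneg 4 ht x y
  have hwz := wt_nonneg 4 ht x z
  have hd : 0 ≤ dist z y / t := by positivity
  rcases le_or_gt (dist z y) t with h | h
  · have h1 := hC φ (hφ.1.of_le (by exact_mod_cast le_top)) z y (16 * (81 * wt 4 t x z) / t) (fun i w hw => by
      refine (mclass_grad ht hφ i w).trans ?_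
      gcongr
      rw [wt_symm 4 t x w, wt_symm 4 t x z]
      refine (wt_le_shift 4 ht (κ := 2) (by norm_num) (x := z) (z := w) ?_ x).trans
        (le_of_eq (by norm_num))
      rw [dist_comm]; linarith)
    refine h1.trans ?_
    have : C * (16 * (81 * wt 4 t x z) / t) * dist z y = (C * 1296) * (dist z y / t) * wt 4 t x z := by
      ring
    rw [this]
    gcongr
    · linarith
    · linarith
  · have h1 : 1 ≤ dist z y / t := by rw [le_div_iff₀ ht]; linarith
    refine (norm_sub_le _ _).trans ((add_le_add (mclass_bound ht hφ y) (mclass_bound ht hφ z)).trans ?_)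
    have h2 : 16 ≤ (C * 1296 + 16) * (dist z y / t) := by nlinarith [mul_nonneg hC0 hd]
    nlinarith [mul_le_mul_of_nonneg_right h2 (add_nonneg hwy hwz)]

lemma level_sum {n : ℕ} {t C₀ : ℝ} (ht : 0 < t)
    (hC : ∀ x : Sph, ∫ y, wt n t x y ∂sphMeasure ≤ C₀) {M : ℕ} (E : Fin M → Set Sph)
    (hEmeas : ∀ k, MeasurableSet (E k))
    (hEdisj : Pairwise fun k k' => Disjoint (E k) (E k'))
    (hEcover : (⋃ k, E k) = Set.univ)
    (hEdiam : ∀ k, ∀ y ∈ E k, ∀ z ∈ E k, gdist y z < t)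
    (xp : Fin M → Sph) (hxp : ∀ k, xp k ∈ E k) (y : Sph) :
    ∑ k, (sphMeasure (E k)).toReal * wt n t (xp k) y ≤ 2 ^ n * C₀ := by
  have hwInt : Integrable (fun z => wt n t y z) sphMeasure := sph_integrable (wt_cont n ht y)
  have h1 : ∀ k, (sphMeasure (E k)).toReal * wt n t (xp k) y ≤
      2 ^ n * ∫ z in E k, wt n t y z ∂sphMeasure := by
    intro k
    rw [← integral_const_mul]
    have h2 : (sphMeasure (E k)).toReal * wt n t (xp k) y = ∫ z in E k, wt n t (xp k) y ∂sphMeasure := by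
      rw [setIntegral_const, smul_eq_mul]; rfl
    rw [h2]
    refine setIntegral_mono_on (integrable_const _) (hwInt.integrableOn.const_mul _) (hEmeas k) ?_
    intro z hz
    rw [wt_symm n t y z]
    refine (wt_le_shift n ht (κ := 1) zero_le_one (x := z) (z := xp k) ?_ y).trans
      (le_of_eq (by norm_num))
    rw [one_mul]
    exact (dist_le_gdist _ _).trans (hEdiam k z hz _ (hxp k)).le
  refine (Finset.sum_le_sum fun k _ => h1 k).trans ?_
  rw [← Finset.mul_sum, ← integral_iUnion_fintype hEmeas hEdisj (fun k => hwInt.integrableOn),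
    hEcover, setIntegral_univ]
  gcongr
  exact hC y

lemma sphInner_continuous_norm {f g : Sph → ℂ} (hf : Continuous f) (hg : Continuous g)
    (h0 : ∫ y, g y ∂sphMeasure = 0) (c : ℂ) :
    ‖sphInner f g‖ ≤ ∫ y, ‖f y - c‖ * ‖g y‖ ∂sphMeasure := by
  have h1 : sphInner f g = ∫ y, (f y - c) * (starRingEnd ℂ) (g y) ∂sphMeasure := by
    unfold sphInner
    have h2 : ∫ y, c * (starRingEnd ℂ) (g y) ∂sphMeasure = 0 := by
      rw [integral_const_mul, integral_conj, h0, map_zero, mul_zero]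
    have hcg : Continuous fun y => (starRingEnd ℂ) (g y) := Complex.continuous_conj.comp hg
    simp only [sub_mul]
    have i1 : Integrable (fun y => f y * (starRingEnd ℂ) (g y)) sphMeasure :=
      sph_integrable (hf.mul hcg)
    have i2 : Integrable (fun y => c * (starRingEnd ℂ) (g y)) sphMeasure :=
      sph_integrable (continuous_const.mul hcg)
    rw [integral_sub i1 i2, h2, sub_zero]
  rw [h1]
  refine (norm_integral_le_integral_norm _).trans (le_of_eq ?_)
  simp only [norm_mul, RCLike.norm_conj]

lemma kernel_bound {C₁ C₀ : ℝ} (hC₁ : 0 ≤ C₁)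
    (hlip : ∀ (t : ℝ), 0 < t → ∀ (x : Sph) (φ : Sph → ℂ), φ ∈ MClass X x t → ∀ y z : Sph,
      ‖φ y - φ z‖ ≤ C₁ * (dist z y / t) * (wt 4 t x y + wt 4 t x z))
    (hC : ∀ (x : Sph) (t : ℝ), 0 < t → ∫ y, wt 3 t x y ∂sphMeasure ≤ C₀)
    {s t : ℝ} (hs : 0 < s) (ht : 0 < t) {xp xq : Sph} {φp φq : Sph → ℂ}
    (hp : φp ∈ MClass X xp t) (hq : φq ∈ MClass X xq s) :
    ‖sphInner φp φq‖ ≤ 16 * C₁ * (s / t) *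
      ((∫ y, wt 3 s xq y * wt 4 t xp y ∂sphMeasure) + C₀ * wt 4 t xp xq) := by
  have hpc := mclass_cont hp
  have hqc := mclass_cont hq
  have c3 := wt_cont 3 hs xq
  have c4 := wt_cont 4 ht xp
  refine (sphInner_continuous_norm hpc hqc hq.2.1 (φp xq)).trans ?_
  have h1 : ∫ y, ‖φp y - φp xq‖ * ‖φq y‖ ∂sphMeasure ≤
      ∫ y, 16 * C₁ * (s / t) * (wt 3 s xq y * wt 4 t xp y + wt 4 t xp xq * wt 3 s xq y) ∂sphMeasure := by
    refine integral_mono (sph_integrable (by fun_prop)) (sph_integrable (by fun_prop)) fun y => ?_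
    have a1 := hlip t ht xp φp hp y xq
    have a2 := mclass_bound hs hq y
    have a3 := dist_wt_four hs xq y
    have b1 := wt_nonneg 4 ht xp y
    have b2 := wt_nonneg 4 ht xp xq
    show ‖φp y - φp xq‖ * ‖φq y‖ ≤ _
    calc ‖φp y - φp xq‖ * ‖φq y‖ ≤ (C₁ * (dist xq y / t) * (wt 4 t xp y + wt 4 t xp xq)) *
          (16 * wt 4 s xq y) := by gcongr
      _ = 16 * C₁ * (s / t) * ((dist xq y / s * wt 4 s xq y) * (wt 4 t xp y + wt 4 t xp xq)) := by
          field_simp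
      _ ≤ 16 * C₁ * (s / t) * (wt 3 s xq y * (wt 4 t xp y + wt 4 t xp xq)) := by gcongr
      _ = _ := by ring
  refine h1.trans ?_
  rw [integral_const_mul, integral_add (sph_integrable (by fun_prop)) (sph_integrable (by fun_prop)),
    integral_const_mul]
  have := hC xq s hs
  have b2 := wt_nonneg 4 ht xp xq
  rw [mul_comm C₀]
  gcongr

lemma wt_four_int {C₀ : ℝ} (hC : ∀ (x : Sph) (t : ℝ), 0 < t → ∫ y, wt 3 t x y ∂sphMeasure ≤ C₀)
    (x : Sph) {t : ℝ} (ht : 0 < t) : ∫ y, wt 4 t x y ∂sphMeasure ≤ C₀ :=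
  (integral_mono (sph_integrable (wt_cont 4 ht x)) (sph_integrable (wt_cont 3 ht x))
    (fun y => wt_four_le_three ht x y)).trans (hC x t ht)

lemma sphInner_norm_symm (f g : Sph → ℂ) : ‖sphInner f g‖ = ‖sphInner g f‖ := by
  have : sphInner f g = (starRingEnd ℂ) (sphInner g f) := by
    unfold sphInner
    rw [← integral_conj]
    congr 1; ext y
    simp [mul_comm]
  rw [this, RCLike.norm_conj]

/-- Sum over one level of the Gram kernel. -/
lemma level_kernel {C₁ C₀ : ℝ} (hC₁ : 0 ≤ C₁) (hC₀ : 0 ≤ C₀)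
    (hlip : ∀ (t : ℝ), 0 < t → ∀ (x : Sph) (φ : Sph → ℂ), φ ∈ MClass X x t → ∀ y z : Sph,
      ‖φ y - φ z‖ ≤ C₁ * (dist z y / t) * (wt 4 t x y + wt 4 t x z))
    (hC : ∀ (x : Sph) (t : ℝ), 0 < t → ∫ y, wt 3 t x y ∂sphMeasure ≤ C₀)
    {s t : ℝ} (hs : 0 < s) (ht : 0 < t) {M : ℕ} (E : Fin M → Set Sph)
    (hEmeas : ∀ k, MeasurableSet (E k))
    (hEdisj : Pairwise fun k k' => Disjoint (E k) (E k'))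
    (hEcover : (⋃ k, E k) = Set.univ)
    (hEdiam : ∀ k, ∀ y ∈ E k, ∀ z ∈ E k, gdist y z < t)
    (xp : Fin M → Sph) (hxp : ∀ k, xp k ∈ E k) (φ : Fin M → Sph → ℂ)
    (hφ : ∀ k, φ k ∈ MClass X (xp k) t) {x : Sph} {f : Sph → ℂ} (hf : f ∈ MClass X x s) :
    ∑ k, (sphMeasure (E k)).toReal * ‖sphInner (φ k) f‖ ≤ 512 * C₁ * C₀ ^ 2 * min (s / t) (t / s) := by
  set m : Fin M → ℝ := fun k => (sphMeasure (E k)).toReal with hm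
  have hm0 : ∀ k, 0 ≤ m k := fun k => ENNReal.toReal_nonneg
  rcases le_total s t with hst | hst
  · have e : min (s / t) (t / s) = s / t := min_eq_left (by
      rw [div_le_div_iff₀ ht hs]; nlinarith)
    rw [e]
    have L := level_sum (n := 4) ht (fun x => wt_four_int hC x ht) E hEmeas hEdisj hEcover hEdiam xp hxp
    have c3 := wt_cont 3 hs x
    have c4 := fun k => wt_cont 4 ht (xp k)
    have h1 : ∑ k, m k * ∫ y, wt 3 s x y * wt 4 t (xp k) y ∂sphMeasure ≤ 16 * C₀ * C₀ := by
      calc ∑ k, m k * ∫ y, wt 3 s x y * wt 4 t (xp k) y ∂sphMeasure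
          = ∫ y, wt 3 s x y * ∑ k, m k * wt 4 t (xp k) y ∂sphMeasure := by
            simp only [← integral_const_mul]
            rw [← integral_finsetSum _ (fun k _ => sph_integrable (by have := c4 k; fun_prop))]
            congr 1; ext y
            rw [Finset.mul_sum]
            exact Finset.sum_congr rfl fun k _ => by ring
        _ ≤ ∫ y, wt 3 s x y * (2 ^ 4 * C₀) ∂sphMeasure := by
            refine integral_mono (sph_integrable (by fun_prop)) (sph_integrable (by fun_prop)) fun y => ?_
            exact mul_le_mul_of_nonneg_left (L y) (wt_nonneg 3 hs x y)
        _ ≤ _ := by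
            rw [integral_mul_const]
            nlinarith [hC x s hs]
    calc ∑ k, m k * ‖sphInner (φ k) f‖
        ≤ ∑ k, m k * (16 * C₁ * (s / t) *
          ((∫ y, wt 3 s x y * wt 4 t (xp k) y ∂sphMeasure) + C₀ * wt 4 t (xp k) x)) := by
          refine Finset.sum_le_sum fun k _ => mul_le_mul_of_nonneg_left ?_ (hm0 k)
          exact kernel_bound hC₁ hlip hC hs ht (hφ k) hf
      _ = 16 * C₁ * (s / t) * (∑ k, m k * (∫ y, wt 3 s x y * wt 4 t (xp k) y ∂sphMeasure)
          + C₀ * ∑ k, m k * wt 4 t (xp k) x) := by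
          rw [Finset.mul_sum, ← Finset.sum_add_distrib, Finset.mul_sum]
          exact Finset.sum_congr rfl fun k _ => by ring
      _ ≤ 16 * C₁ * (s / t) * (16 * C₀ * C₀ + C₀ * (2 ^ 4 * C₀)) := by
          gcongr
          exact L x
      _ = _ := by ring
  · have e : min (s / t) (t / s) = t / s := min_eq_right (by
      rw [div_le_div_iff₀ hs ht]; nlinarith)
    rw [e]
    have L3 := level_sum (n := 3) ht (fun x => hC x t ht) E hEmeas hEdisj hEcover hEdiam xp hxp
    have L4 := level_sum (n := 4) hs (fun x => wt_four_int hC x hs) E hEmeas hEdisj hEcover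
      (fun k y hy z hz => (hEdiam k y hy z hz).trans_le hst) xp hxp
    have c4 := wt_cont 4 hs x
    have c3 := fun k => wt_cont 3 ht (xp k)
    have h1 : ∑ k, m k * ∫ y, wt 3 t (xp k) y * wt 4 s x y ∂sphMeasure ≤ 16 * C₀ * C₀ := by
      calc ∑ k, m k * ∫ y, wt 3 t (xp k) y * wt 4 s x y ∂sphMeasure
          = ∫ y, wt 4 s x y * ∑ k, m k * wt 3 t (xp k) y ∂sphMeasure := by
            simp only [← integral_const_mul]
            rw [← integral_finsetSum _ (fun k _ => sph_integrable (by have := c3 k; fun_prop))]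
            congr 1; ext y
            rw [Finset.mul_sum]
            exact Finset.sum_congr rfl fun k _ => by ring
        _ ≤ ∫ y, wt 4 s x y * (2 ^ 3 * C₀) ∂sphMeasure := by
            refine integral_mono (sph_integrable (by fun_prop)) (sph_integrable (by fun_prop)) fun y => ?_
            exact mul_le_mul_of_nonneg_left (L3 y) (wt_nonneg 4 hs x y)
        _ ≤ _ := by
            rw [integral_mul_const]
            nlinarith [wt_four_int hC x hs]
    calc ∑ k, m k * ‖sphInner (φ k) f‖
        ≤ ∑ k, m k * (16 * C₁ * (t / s) *
          ((∫ y, wt 3 t (xp k) y * wt 4 s x y ∂sphMeasure) + C₀ * wt 4 s x (xp k))) := by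
          refine Finset.sum_le_sum fun k _ => mul_le_mul_of_nonneg_left ?_ (hm0 k)
          rw [sphInner_norm_symm]
          exact kernel_bound hC₁ hlip hC ht hs hf (hφ k)
      _ = 16 * C₁ * (t / s) * (∑ k, m k * (∫ y, wt 3 t (xp k) y * wt 4 s x y ∂sphMeasure)
          + C₀ * ∑ k, m k * wt 4 s (xp k) x) := by
          rw [Finset.mul_sum, ← Finset.sum_add_distrib, Finset.mul_sum]
          exact Finset.sum_congr rfl fun k _ => by rw [wt_symm 4 s x (xp k)]; ring
      _ ≤ 16 * C₁ * (t / s) * (16 * C₀ * C₀ + C₀ * (2 ^ 4 * C₀)) := by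
          gcongr
          exact L4 x
      _ = _ := by ring

end EstPart

section FinalPart
open Set

lemma exists_sum_operator {H : Type*} [NormedAddCommGroup H] [InnerProductSpace ℂ H]
    [CompleteSpace H] {P : Type*} (v w : P → H) (m : P → ℝ)
    (hm : ∀ p, 0 ≤ m p) (C : ℝ) (hC0 : 0 ≤ C)
    (hv : ∀ (F : H) (s : Finset P), ∑ p ∈ s, m p * ‖inner ℂ (v p) F‖ ^ 2 ≤ C * ‖F‖ ^ 2)
    (hw : ∀ (F : H) (s : Finset P), ∑ p ∈ s, m p * ‖inner ℂ (w p) F‖ ^ 2 ≤ C * ‖F‖ ^ 2) :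
    ∃ T : H →L[ℂ] H, ∀ F, HasSum (fun p => ((m p : ℂ) * inner ℂ (v p) F) • w p) (T F) := by
  obtain ⟨key, hsum, -⟩ := summable_of_bessel v w m hm C hC0 hv hw
  refine ⟨LinearMap.mkContinuous
    { toFun := fun F => ∑' p, ((m p : ℂ) * inner ℂ (v p) F) • w p
      map_add' := fun F G => by
        rw [← (hsum F).tsum_add (hsum G)]
        congr 1; ext p
        rw [inner_add_right, mul_add, add_smul]
      map_smul' := fun c F => by
        rw [RingHom.id_apply, ← (hsum F).tsum_const_smul c]
        congr 1; ext p
        rw [inner_smul_right, smul_smul]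
        congr 1; ring } C ?_, fun F => (hsum F).hasSum⟩
  intro F
  have h1 : Filter.Tendsto (fun s : Finset P => ‖∑ p ∈ s, ((m p : ℂ) * inner ℂ (v p) F) • w p‖)
      Filter.atTop (nhds ‖∑' p, ((m p : ℂ) * inner ℂ (v p) F) • w p‖) := ((hsum F).hasSum).norm
  refine le_of_tendsto' h1 fun s => ?_
  refine le_of_sq_le_sq ?_ (by positivity)
  refine (key F s).trans ?_
  rw [mul_pow, pow_two C, mul_assoc]
  exact mul_le_mul_of_nonneg_left (hv F s) hC0

lemma rho_summable {a : ℝ} (ha : 1 < a) : Summable fun l : ℤ => min (a ^ l) (a ^ (-l)) := by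
  have ha0 : 0 < a := by linarith
  have hg : Summable fun n : ℕ => (a⁻¹) ^ n :=
    summable_geometric_of_lt_one (by positivity) (inv_lt_one_of_one_lt₀ ha)
  refine Summable.of_nat_of_neg ?_ ?_
  · refine Summable.of_nonneg_of_le (fun n => by positivity) (fun n => ?_) hg
    refine (min_le_right _ _).trans (le_of_eq ?_)
    rw [zpow_neg, zpow_natCast, inv_pow]
  · refine Summable.of_nonneg_of_le (fun n => by positivity) (fun n => ?_) hg
    refine (min_le_left _ _).trans (le_of_eq ?_)
    rw [zpow_neg, zpow_natCast, inv_pow]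

lemma sigma_sum_le {N : ℤ → ℕ} (g : ((j : ℤ) × Fin (N j)) → ℝ) (hg : ∀ p, 0 ≤ g p) (b : ℤ → ℝ)
    (hb : Summable b) (hgb : ∀ l, ∑ k, g ⟨l, k⟩ ≤ b l) (s : Finset ((j : ℤ) × Fin (N j))) :
    ∑ q ∈ s, g q ≤ ∑' l, b l := by
  classical
  calc ∑ q ∈ s, g q ≤ ∑ q ∈ (s.image Sigma.fst).sigma (fun l => (Finset.univ : Finset (Fin (N l)))), g q := by
        refine Finset.sum_le_sum_of_subset_of_nonneg (fun q hq => ?_) (fun q _ _ => hg q)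
        rw [Finset.mem_sigma]
        exact ⟨Finset.mem_image_of_mem _ hq, Finset.mem_univ _⟩
    _ = ∑ l ∈ s.image Sigma.fst, ∑ k, g ⟨l, k⟩ := Finset.sum_sigma _ _ _
    _ ≤ ∑ l ∈ s.image Sigma.fst, b l := Finset.sum_le_sum fun l _ => hgb l
    _ ≤ _ := hb.sum_le_tsum _ fun l _ => (Finset.sum_nonneg fun k _ => hg _).trans (hgb l)

lemma inner_eq_sphInner (f g : Lp ℂ 2 sphMeasure) :
    inner ℂ f g = sphInner (g : Sph → ℂ) (f : Sph → ℂ) := by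
  rw [L2.inner_def]
  rfl

lemma sphInner_congr {f f' g g' : Sph → ℂ} (hf : f =ᵐ[sphMeasure] f') (hg : g =ᵐ[sphMeasure] g') :
    sphInner f g = sphInner f' g' := by
  unfold sphInner
  refine integral_congr_ae ?_
  filter_upwards [hf, hg] with y h1 h2
  rw [h1, h2]

lemma c1_dense : Dense {f : Lp ℂ 2 sphMeasure | ∃ (F : Sph → ℂ)
    (_ : ContMDiff (𝓡 2) 𝓘(ℝ, ℂ) 1 F) (hm : MemLp F 2 sphMeasure), f = hm.toLp F} := by
  have h1 : Dense {g : C(Sph, ℂ) | ContMDiff (𝓡 2) 𝓘(ℝ, ℂ) 1 g} := by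
    rw [Metric.dense_iff]
    intro f ε hε
    obtain ⟨g, hg, -⟩ := f.continuous.exists_contMDiff_approx (𝓡 2) 1
      (ε := fun _ => ε) continuous_const (fun _ => hε)
    refine ⟨⟨g, g.contMDiff.continuous⟩, ?_, g.contMDiff⟩
    rw [mem_ball, ContinuousMap.dist_lt_iff hε]
    exact hg
  have h2 := ContinuousMap.toLp_denseRange (p := 2) ℂ sphMeasure ℂ (by norm_num)
  refine (h2.dense_image (ContinuousLinearMap.continuous _) h1).mono ?_
  rintro _ ⟨g, hg, rfl⟩
  have hmem : MemLp (g : Sph → ℂ) 2 sphMeasure :=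
    (memLp_congr_ae (ContinuousMap.coeFn_toLp (p := 2) (𝕜 := ℂ) sphMeasure g)).1 (Lp.memLp _)
  refine ⟨g, hg, hmem, ?_⟩
  apply Lp.ext
  exact (ContinuousMap.coeFn_toLp (p := 2) (𝕜 := ℂ) sphMeasure g).trans hmem.coeFn_toLp.symm

variable {ι : Type*} {X : ι → (x : Sph) → TangentSpace (𝓡 2) x}

lemma c1_lip [Fintype ι]
    (hXsmooth : ∀ i, ContMDiff (𝓡 2) (𝓡 2).tangent (⊤ : ℕ∞)
      (fun x => (⟨x, X i x⟩ : TangentBundle (𝓡 2) Sph)))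
    (hXspan : ∀ x : Sph, Submodule.span ℝ (Set.range fun i => X i x) = ⊤)
    (F : Sph → ℂ) (hF : ContMDiff (𝓡 2) 𝓘(ℝ, ℂ) 1 F) :
    ∃ L : ℝ, 0 ≤ L ∧ ∀ x y, ‖F y - F x‖ ≤ L * dist x y := by
  obtain ⟨C, hC0, hC⟩ := great_circle_lip X hXsmooth hXspan
  have h1 : ∀ i, ∃ M, ∀ z ∈ (univ : Set Sph), ‖mD F z (X i z)‖ ≤ M := fun i =>
    isCompact_univ.exists_bound_of_continuousOn (mD_cont hF (X i) (hXsmooth i)).continuousOn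
  choose M hM using h1
  refine ⟨C * ∑ i, |M i|, by positivity, fun x y => ?_⟩
  refine hC F hF x y _ fun i z _ => (hM i z (mem_univ z)).trans ((le_abs_self _).trans ?_)
  exact Finset.single_le_sum (f := fun i => |M i|) (fun i _ => abs_nonneg _) (Finset.mem_univ i)

lemma sphInner_lip_bound {C₀ L : ℝ} (hC₀ : 0 ≤ C₀) (hL : 0 ≤ L)
    (hC : ∀ (x : Sph) (t : ℝ), 0 < t → ∫ y, wt 3 t x y ∂sphMeasure ≤ C₀)
    {F : Sph → ℂ} (hFc : Continuous F) (hF : ∀ x y, ‖F y - F x‖ ≤ L * dist x y)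
    {t : ℝ} (ht : 0 < t) {x : Sph} {φ : Sph → ℂ} (hφ : φ ∈ MClass X x t) :
    ‖sphInner F φ‖ ≤ 16 * L * (C₀ + 2 * (sphMeasure univ).toReal) * min t t⁻¹ := by
  set T := (sphMeasure univ).toReal with hT
  have hT0 : 0 ≤ T := ENNReal.toReal_nonneg
  have hφc := mclass_cont hφ
  have c3 := wt_cont 3 ht x
  have c4 := wt_cont 4 ht x
  have h1 : ‖sphInner F φ‖ ≤ ∫ y, 16 * L * (dist x y * wt 4 t x y) ∂sphMeasure := by
    refine (sphInner_continuous_norm hFc hφc hφ.2.1 (F x)).trans ?_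
    refine integral_mono (sph_integrable (by fun_prop)) (sph_integrable (by fun_prop)) fun y => ?_
    show ‖F y - F x‖ * ‖φ y‖ ≤ _
    calc ‖F y - F x‖ * ‖φ y‖ ≤ (L * dist x y) * (16 * wt 4 t x y) := by
          have := hF x y
          have := mclass_bound ht hφ y
          gcongr
      _ = _ := by ring
  refine h1.trans ?_
  rw [integral_const_mul, mul_assoc (16 * L)]
  refine mul_le_mul_of_nonneg_left ?_ (by positivity)
  rcases le_total t 1 with h | h
  · rw [min_eq_left (h.trans ((one_le_inv₀ ht).2 h))]
    have h2 : ∫ y, dist x y * wt 4 t x y ∂sphMeasure ≤ ∫ y, t * wt 3 t x y ∂sphMeasure := by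
      refine integral_mono (sph_integrable (by fun_prop)) (sph_integrable (by fun_prop)) fun y => ?_
      show dist x y * wt 4 t x y ≤ t * wt 3 t x y
      calc dist x y * wt 4 t x y = t * (dist x y / t * wt 4 t x y) := by field_simp
        _ ≤ _ := mul_le_mul_of_nonneg_left (dist_wt_four ht x y) ht.le
    refine h2.trans ?_
    rw [integral_const_mul]
    nlinarith [hC x t ht, mul_nonneg hT0 ht.le]
  · have hi : t⁻¹ ≤ 1 := inv_le_one_of_one_le₀ h
    have hi0 : 0 < t⁻¹ := by positivity
    rw [min_eq_right (hi.trans h)]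
    have h2 : ∫ y, dist x y * wt 4 t x y ∂sphMeasure ≤ ∫ y, 2 * t⁻¹ ∂sphMeasure := by
      refine integral_mono (sph_integrable (by fun_prop)) (integrable_const _) fun y => ?_
      show dist x y * wt 4 t x y ≤ 2 * t⁻¹
      have hd : dist x y ≤ 2 := by
        rw [Subtype.dist_eq, dist_eq_norm]
        refine (norm_sub_le _ _).trans ?_
        rw [sph_norm, sph_norm]; norm_num
      have hw : wt 4 t x y ≤ t⁻¹ := by
        unfold wt
        have h3 : ((1 + dist x y / t) ^ 4)⁻¹ ≤ 1 := by
          refine inv_le_one_of_one_le₀ (one_le_pow₀ ?_)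
          have : 0 ≤ dist x y / t := by positivity
          linarith
        have h4 : (t ^ 2)⁻¹ ≤ t⁻¹ := by
          rw [← inv_pow]; nlinarith
        calc (t ^ 2)⁻¹ * ((1 + dist x y / t) ^ 4)⁻¹ ≤ (t ^ 2)⁻¹ * 1 := by gcongr
          _ ≤ _ := by rw [mul_one]; exact h4
      have := wt_nonneg 4 ht x y
      gcongr
    refine h2.trans ?_
    rw [integral_const, smul_eq_mul]
    have : sphMeasure.real univ = T := rfl
    rw [this]
    nlinarith [mul_nonneg hC₀ hi0.le]

end FinalPart

section GluePart
open Set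

variable {ι : Type*} {X : ι → (x : Sph) → TangentSpace (𝓡 2) x}

lemma cont_memLp {f : Sph → ℂ} (hf : Continuous f) : MemLp f 2 sphMeasure :=
  (memLp_congr_ae (ContinuousMap.coeFn_toLp (p := 2) (𝕜 := ℂ) sphMeasure ⟨f, hf⟩)).1 (Lp.memLp _)

lemma rho_shift {a : ℝ} (ha : 1 < a) (j : ℤ) :
    Summable (fun l : ℤ => min (a ^ j / a ^ l) (a ^ l / a ^ j)) ∧
    ∑' l : ℤ, min (a ^ j / a ^ l) (a ^ l / a ^ j) = ∑' l : ℤ, min (a ^ l) (a ^ (-l)) := by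
  have ha0 : a ≠ 0 := by positivity
  have e : (fun l : ℤ => min (a ^ j / a ^ l) (a ^ l / a ^ j)) =
      (fun l : ℤ => min (a ^ l) (a ^ (-l))) ∘ (Equiv.subLeft j) := by
    ext l
    simp only [Function.comp, Equiv.subLeft_apply, neg_sub, zpow_sub₀ ha0]
  rw [e]
  exact ⟨(Equiv.summable_iff _).2 (rho_summable ha),
    (Equiv.subLeft j).tsum_eq (fun l : ℤ => min (a ^ l) (a ^ (-l)))⟩

lemma family_bessel [Fintype ι]
    (hXsmooth : ∀ i, ContMDiff (𝓡 2) (𝓡 2).tangent (⊤ : ℕ∞)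
      (fun x => (⟨x, X i x⟩ : TangentBundle (𝓡 2) Sph)))
    (hXspan : ∀ x : Sph, Submodule.span ℝ (Set.range fun i => X i x) = ⊤)
    {a : ℝ} (ha : 1 < a)
    (N : ℤ → ℕ) (E : (j : ℤ) → Fin (N j) → Set Sph)
    (hEmeas : ∀ j k, MeasurableSet (E j k))
    (hEdisj : ∀ j, Pairwise fun k k' => Disjoint (E j k) (E j k'))
    (hEcover : ∀ j, (⋃ k, E j k) = Set.univ)
    (hEdiam : ∀ j k, ∀ y ∈ E j k, ∀ z ∈ E j k, gdist y z < a ^ j)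
    (xp : (j : ℤ) → Fin (N j) → Sph) (hxp : ∀ j k, xp j k ∈ E j k) :
    ∃ C : ℝ, 0 ≤ C ∧ ∀ φ : (j : ℤ) → Fin (N j) → (Sph → ℂ),
      (∀ j k, φ j k ∈ MClass X (xp j k) (a ^ j)) →
      ∀ hmφ : ∀ j k, MemLp (φ j k) 2 sphMeasure,
      ∀ (F : Lp ℂ 2 sphMeasure) (s : Finset ((j : ℤ) × Fin (N j))),
        ∑ p ∈ s, (sphMeasure (E p.1 p.2)).toReal *
          ‖inner ℂ ((hmφ p.1 p.2).toLp (φ p.1 p.2)) F‖ ^ 2 ≤ C * ‖F‖ ^ 2 := by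
  obtain ⟨C₁, hC₁, hlip⟩ := mclass_lip hXsmooth hXspan
  obtain ⟨C₀, hC₀, hC⟩ := wt_int
  have ha0 : 0 < a := by linarith
  refine ⟨512 * C₁ * C₀ ^ 2 * ∑' l : ℤ, min (a ^ l) (a ^ (-l)),
    mul_nonneg (by positivity) (tsum_nonneg fun l => by positivity), ?_⟩
  intro φ hφ hmφ F s
  refine bessel_of_schur (fun p : (j : ℤ) × Fin (N j) => (hmφ p.1 p.2).toLp (φ p.1 p.2)) _
    (fun p => ENNReal.toReal_nonneg) _
    (mul_nonneg (by positivity) (tsum_nonneg fun l => by positivity)) ?_ F s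
  intro s p
  obtain ⟨hs, he⟩ := rho_shift ha p.1
  rw [← he, ← tsum_mul_left]
  refine sigma_sum_le (fun q : (j : ℤ) × Fin (N j) => (sphMeasure (E q.1 q.2)).toReal *
    ‖inner ℂ ((hmφ p.1 p.2).toLp (φ p.1 p.2)) ((hmφ q.1 q.2).toLp (φ q.1 q.2))‖)
    (fun q => mul_nonneg ENNReal.toReal_nonneg (norm_nonneg _)) _ (hs.mul_left _) ?_ s
  intro l
  refine le_trans (le_of_eq ?_) (level_kernel hC₁ hC₀ hlip hC (zpow_pos ha0 p.1) (zpow_pos ha0 l)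
    (E l) (hEmeas l) (hEdisj l) (hEcover l) (hEdiam l) (xp l) (hxp l) (φ l) (hφ l)
    (hφ p.1 p.2))
  refine Finset.sum_congr rfl fun k _ => ?_
  rw [inner_eq_sphInner, sphInner_congr (MemLp.coeFn_toLp _) (MemLp.coeFn_toLp _)]

lemma pointwise_summable [Fintype ι]
    (hXsmooth : ∀ i, ContMDiff (𝓡 2) (𝓡 2).tangent (⊤ : ℕ∞)
      (fun x => (⟨x, X i x⟩ : TangentBundle (𝓡 2) Sph)))
    (hXspan : ∀ x : Sph, Submodule.span ℝ (Set.range fun i => X i x) = ⊤)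
    {a : ℝ} (ha : 1 < a)
    (N : ℤ → ℕ) (E : (j : ℤ) → Fin (N j) → Set Sph)
    (hEmeas : ∀ j k, MeasurableSet (E j k))
    (hEdisj : ∀ j, Pairwise fun k k' => Disjoint (E j k) (E j k'))
    (hEcover : ∀ j, (⋃ k, E j k) = Set.univ)
    (hEdiam : ∀ j k, ∀ y ∈ E j k, ∀ z ∈ E j k, gdist y z < a ^ j)
    (xp : (j : ℤ) → Fin (N j) → Sph) (hxp : ∀ j k, xp j k ∈ E j k)
    (φ ψ : (j : ℤ) → Fin (N j) → (Sph → ℂ))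
    (hφ : ∀ j k, φ j k ∈ MClass X (xp j k) (a ^ j))
    (hψ : ∀ j k, ψ j k ∈ MClass X (xp j k) (a ^ j))
    (F : Sph → ℂ) (hF : ContMDiff (𝓡 2) 𝓘(ℝ, ℂ) 1 F) (x : Sph) :
    Summable fun p : (j : ℤ) × Fin (N j) =>
      ((sphMeasure (E p.1 p.2)).toReal : ℂ) * sphInner F (φ p.1 p.2) * ψ p.1 p.2 x := by
  obtain ⟨C₀, hC₀, hC⟩ := wt_int
  obtain ⟨L, hL, hFL⟩ := c1_lip hXsmooth hXspan F hF
  have ha0 : 0 < a := by linarith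
  set K : ℝ := 16 * L * (C₀ + 2 * (sphMeasure univ).toReal) with hK
  have hK0 : 0 ≤ K := by
    have : 0 ≤ (sphMeasure univ).toReal := ENNReal.toReal_nonneg
    positivity
  refine Summable.of_norm ?_
  refine summable_of_sum_le (c := ∑' l : ℤ, K * 16 * (2 ^ 4 * C₀) * min (a ^ l) (a ^ (-l)))
    (fun p => norm_nonneg _) fun s => ?_
  refine sigma_sum_le _ (fun p => norm_nonneg _) _ ((rho_summable ha).mul_left _) ?_ s
  intro l
  have hl : 0 < a ^ l := zpow_pos ha0 l
  have hmin : 0 ≤ min (a ^ l) (a ^ (-l)) := by positivity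
  calc ∑ k, ‖((sphMeasure (E l k)).toReal : ℂ) * sphInner F (φ l k) * ψ l k x‖
      ≤ ∑ k, K * 16 * min (a ^ l) (a ^ (-l)) *
        ((sphMeasure (E l k)).toReal * wt 4 (a ^ l) (xp l k) x) := by
        refine Finset.sum_le_sum fun k _ => ?_
        have h1 := sphInner_lip_bound hC₀ hL hC hF.continuous hFL hl (hφ l k)
        have h2 := mclass_bound hl (hψ l k) x
        have hm : 0 ≤ (sphMeasure (E l k)).toReal := ENNReal.toReal_nonneg
        rw [← zpow_neg] at h1
        rw [norm_mul, norm_mul, Complex.norm_real, Real.norm_of_nonneg hm]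
        calc (sphMeasure (E l k)).toReal * ‖sphInner F (φ l k)‖ * ‖ψ l k x‖
            ≤ (sphMeasure (E l k)).toReal * (K * min (a ^ l) (a ^ (-l))) *
              (16 * wt 4 (a ^ l) (xp l k) x) := by gcongr
          _ = _ := by ring
    _ = K * 16 * min (a ^ l) (a ^ (-l)) *
        ∑ k, (sphMeasure (E l k)).toReal * wt 4 (a ^ l) (xp l k) x := by rw [Finset.mul_sum]
    _ ≤ K * 16 * min (a ^ l) (a ^ (-l)) * (2 ^ 4 * C₀) := by
        refine mul_le_mul_of_nonneg_left ?_ (by positivity)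
        exact level_sum hl (fun x => wt_four_int hC x hl) (E l) (hEmeas l) (hEdisj l)
          (hEcover l) (hEdiam l) (xp l) (hxp l) x
    _ = _ := by ring

lemma hasSum_lp_ae {P : Type*} [Countable P] (c : P → ℂ) (g : P → Sph → ℂ)
    (hg : ∀ p, MemLp (g p) 2 sphMeasure) (T : Lp ℂ 2 sphMeasure)
    (hT : HasSum (fun p => c p • (hg p).toLp (g p)) T)
    (hs : ∀ x, Summable fun p => c p * g p x) :
    (T : Sph → ℂ) =ᵐ[sphMeasure] fun x => ∑' p, c p * g p x := by
  obtain ⟨ns, h1, h2⟩ := (tendstoInMeasure_of_tendsto_Lp hT).exists_seq_tendsto_ae'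
  have h3 : ∀ᵐ x ∂sphMeasure, ∀ p, ((c p • (hg p).toLp (g p) : Lp ℂ 2 sphMeasure) : Sph → ℂ) x
      = c p * g p x := by
    rw [ae_all_iff]
    intro p
    filter_upwards [Lp.coeFn_smul (c p) ((hg p).toLp (g p)), (hg p).coeFn_toLp] with x e1 e2
    rw [e1, Pi.smul_apply, e2, smul_eq_mul]
  have h4 : ∀ᵐ x ∂sphMeasure, ∀ i : ℕ,
      ((∑ p ∈ ns i, c p • (hg p).toLp (g p) : Lp ℂ 2 sphMeasure) : Sph → ℂ) x
      = ∑ p ∈ ns i, ((c p • (hg p).toLp (g p) : Lp ℂ 2 sphMeasure) : Sph → ℂ) x := by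
    rw [ae_all_iff]
    intro i
    filter_upwards [Lp.coeFn_finsetSum (ns i) (fun p => c p • (hg p).toLp (g p))] with x e1
    rw [e1]
    simp
  filter_upwards [h2, h3, h4] with x e2 e3 e4
  have h5 := ((hs x).hasSum : Filter.Tendsto _ _ _).comp h1
  refine tendsto_nhds_unique e2 (h5.congr fun i => ?_)
  rw [e4]
  exact Finset.sum_congr rfl fun p _ => (e3 p).symm

end GluePart


/-- **The summation operator theorem on `S²` (parts (c) and (d)).**
With `𝒫`, `a > 1`, partitions `{E_{j,k}}` of `S²` of geodesic diameter `< a^j`,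
points `x_{j,k} ∈ E_{j,k}`, `φ_{j,k}, ψ_{j,k} ∈ ℳ_{x_{j,k},a^j}` as in the summation
operator theorem, and `S` the bounded operator on `L²(S²)` satisfying
`SF = ∑_{j,k} μ(E_{j,k})⟨F,φ_{j,k}⟩ψ_{j,k}` for `F ∈ C¹(S²)`:
(c) for every `F ∈ L²(S²)` the series `∑_{j,k} μ(E_{j,k})⟨F,φ_{j,k}⟩ψ_{j,k}`
converges unconditionally in `L²` to `SF`; and (d) for all `F, G ∈ L²(S²)`,
`⟨SF,G⟩ = ∑_{j,k} μ(E_{j,k})⟨F,φ_{j,k}⟩⟨ψ_{j,k},G⟩`, the series converging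
absolutely. -/
theorem statement_15
    (ι : Type*) [Fintype ι] (X : ι → (x : Sph) → TangentSpace (𝓡 2) x)
    (hXsmooth : ∀ i, ContMDiff (𝓡 2) (𝓡 2).tangent (⊤ : ℕ∞)
      (fun x => (⟨x, X i x⟩ : TangentBundle (𝓡 2) Sph)))
    (hXspan : ∀ x : Sph, Submodule.span ℝ (Set.range fun i => X i x) = ⊤)
    (a : ℝ) (ha : 1 < a)
    (N : ℤ → ℕ) (E : (j : ℤ) → Fin (N j) → Set Sph)
    (hEmeas : ∀ j k, MeasurableSet (E j k))
    (hEdisj : ∀ j, Pairwise fun k k' => Disjoint (E j k) (E j k'))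
    (hEcover : ∀ j, (⋃ k, E j k) = Set.univ)
    (hEdiam : ∀ j k, ∀ y ∈ E j k, ∀ z ∈ E j k, gdist y z < a ^ j)
    (xp : (j : ℤ) → Fin (N j) → Sph) (hxp : ∀ j k, xp j k ∈ E j k)
    (φ ψ : (j : ℤ) → Fin (N j) → (Sph → ℂ))
    (hφ : ∀ j k, φ j k ∈ MClass X (xp j k) (a ^ j))
    (hψ : ∀ j k, ψ j k ∈ MClass X (xp j k) (a ^ j))
    (hmψ : ∀ j k, MemLp (ψ j k) 2 sphMeasure)
    (S : Lp ℂ 2 sphMeasure →L[ℂ] Lp ℂ 2 sphMeasure)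
    (hS : ∀ F : Sph → ℂ, ContMDiff (𝓡 2) 𝓘(ℝ, ℂ) 1 F →
      ∀ hm : MemLp F 2 sphMeasure,
        (S (hm.toLp F) : Sph → ℂ) =ᵐ[sphMeasure]
          fun x : Sph => ∑' p : (j : ℤ) × Fin (N j),
            (sphMeasure (E p.1 p.2)).toReal * sphInner F (φ p.1 p.2) * ψ p.1 p.2 x) :
    -- (c) unconditional convergence in `L²`
    (∀ F : Lp ℂ 2 sphMeasure,
      HasSum
        (fun p : (j : ℤ) × Fin (N j) =>
          ((sphMeasure (E p.1 p.2)).toReal * sphInner (F : Sph → ℂ) (φ p.1 p.2)) •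
            ((hmψ p.1 p.2).toLp (ψ p.1 p.2)))
        (S F)) ∧
    -- (d) absolutely convergent expansion of `⟨SF,G⟩`
    (∀ F G : Lp ℂ 2 sphMeasure,
      Summable
        (fun p : (j : ℤ) × Fin (N j) =>
          ‖(sphMeasure (E p.1 p.2)).toReal * sphInner (F : Sph → ℂ) (φ p.1 p.2) *
            sphInner (ψ p.1 p.2) (G : Sph → ℂ)‖) ∧
      (∑' p : (j : ℤ) × Fin (N j),
          (sphMeasure (E p.1 p.2)).toReal * sphInner (F : Sph → ℂ) (φ p.1 p.2) *
            sphInner (ψ p.1 p.2) (G : Sph → ℂ)) =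
        sphInner (S F : Sph → ℂ) (G : Sph → ℂ)) := by
  have hmφ : ∀ j k, MemLp (φ j k) 2 sphMeasure := fun j k => cont_memLp (mclass_cont (hφ j k))
  obtain ⟨C, hC0, hB⟩ := family_bessel hXsmooth hXspan ha N E hEmeas hEdisj hEcover hEdiam xp hxp
  let v : ((j : ℤ) × Fin (N j)) → Lp ℂ 2 sphMeasure := fun p => (hmφ p.1 p.2).toLp (φ p.1 p.2)
  let w : ((j : ℤ) × Fin (N j)) → Lp ℂ 2 sphMeasure := fun p => (hmψ p.1 p.2).toLp (ψ p.1 p.2)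
  let m : ((j : ℤ) × Fin (N j)) → ℝ := fun p => (sphMeasure (E p.1 p.2)).toReal
  have hm : ∀ p, 0 ≤ m p := fun p => ENNReal.toReal_nonneg
  have hv := hB φ hφ hmφ
  have hw := hB ψ hψ hmψ
  obtain ⟨T, hT⟩ := exists_sum_operator v w m hm C hC0 hv hw
  obtain ⟨-, -, habs⟩ := summable_of_bessel v w m hm C hC0 hv hw
  have ev : ∀ (F : Lp ℂ 2 sphMeasure) p, inner ℂ (v p) F = sphInner (F : Sph → ℂ) (φ p.1 p.2) :=
    fun F p => by
      rw [inner_eq_sphInner]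
      exact sphInner_congr (Filter.EventuallyEq.refl _ _) (MemLp.coeFn_toLp _)
  have ew : ∀ (G : Lp ℂ 2 sphMeasure) p, inner ℂ G (w p) = sphInner (ψ p.1 p.2) (G : Sph → ℂ) :=
    fun G p => by
      rw [inner_eq_sphInner]
      exact sphInner_congr (MemLp.coeFn_toLp _) (Filter.EventuallyEq.refl _ _)
  have hTS : T = S := by
    have : (T : Lp ℂ 2 sphMeasure → Lp ℂ 2 sphMeasure) = S := by
      refine Continuous.ext_on c1_dense T.continuous S.continuous ?_
      rintro _ ⟨F, hF, hmF, rfl⟩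
      apply Lp.ext
      refine Filter.EventuallyEq.trans ?_ (hS F hF hmF).symm
      refine hasSum_lp_ae
        (fun p : (j : ℤ) × Fin (N j) =>
          ((sphMeasure (E p.1 p.2)).toReal : ℂ) * sphInner F (φ p.1 p.2))
        (fun p => ψ p.1 p.2) (fun p => hmψ p.1 p.2) _ ?_ ?_
      · convert hT (hmF.toLp F) using 3 with p
        rw [ev]
        congr 1
        exact sphInner_congr hmF.coeFn_toLp.symm (Filter.EventuallyEq.refl _ _)
      · exact pointwise_summable hXsmooth hXspan ha N E hEmeas hEdisj hEcover hEdiam xp hxp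
          φ ψ hφ hψ F hF
    exact ContinuousLinearMap.coeFn_injective this
  subst hTS
  have hc : ∀ F : Lp ℂ 2 sphMeasure,
      HasSum
        (fun p : (j : ℤ) × Fin (N j) =>
          ((sphMeasure (E p.1 p.2)).toReal * sphInner (F : Sph → ℂ) (φ p.1 p.2)) •
            ((hmψ p.1 p.2).toLp (ψ p.1 p.2)))
        (T F) := by
    intro F
    simpa only [ev] using hT F
  refine ⟨hc, fun F G => ⟨?_, ?_⟩⟩
  · simpa only [ev, ew] using habs F G
  · have h1 := (innerSL ℂ G).hasSum (hT F)
    rw [← inner_eq_sphInner]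
    refine Eq.trans (tsum_congr fun p => ?_) h1.tsum_eq
    simp only [Function.comp, innerSL_apply_apply, inner_smul_right, ev, ew]
    rfl
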